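/- For every even positive integer n, there exists a positive integer m that is a multiple of n such that ω*(m) = ω*(n) + 1. -/

import Mathlib

/-!
Let `M = K!` with `K = 2 ^ k` large, and let `p ≡ -1 [MOD M]` be a large prime. Then
`p - 1 = 2 * D₀` where `D₀` is odd and coprime to `M`, so every divisor `D > 1` of `D₀` exceeds
`K`. As `n` is even, `n * D₀` has the new shifted prime divisor `p - 1`. Take the least `D ∣ D₀` for
which `n * D` has a new one: by minimality every new one is of the form `e * D` with `e ∣ n`. So if
there are two of them, then `1 + e₁ * D` and `1 + e₂ * D` are both prime, for some divisors
`e₁ < e₂` of `n`.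

It remains to find `p` such that no divisor `D > 1` of `D₀` has this property. By the large sieve,
such `D` have density `O(1 / (log x) ^ 2)` near `x`, so the sum of `1 / φ D` over those exceeding
`K` tends to zero with `1 / K`. By Brun–Titchmarsh, the primes `p ≡ -1 [MOD M]` with `D ∣ p - 1`
for some such `D`, coprime to `M`, are therefore a small proportion of what Dirichlet's theorem
provides.
-/

open Filter Real

/-- `ω*(n)`: the number of divisors `d` of `n` such that `d + 1` is prime. -/
def omegaStar (n : ℕ) : ℕ := (n.divisors.filter (fun d => Nat.Prime (d + 1))).card

open Finset Function

section PeriodicSums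

variable {R : Type*}

lemma sum_range_natCast_zmod [AddCommMonoid R] (Q : ℕ) [NeZero Q] (g : ZMod Q → R) :
    ∑ t ∈ range Q, g t = ∑ a, g a := by
  refine sum_bij' (fun t _ ↦ (t : ZMod Q)) (fun a _ ↦ a.val) (by simp)
    (fun a _ ↦ mem_range.2 a.val_lt) (fun t ht ↦ ?_) (by simp) (by simp)
  exact ZMod.val_natCast_of_lt (mem_range.1 ht)

lemma sum_range_mul_of_periodic [CommSemiring R] {a b : ℕ} (hab : a.Coprime b) {f g : ℕ → R}
    (hf : Periodic f a) (hg : Periodic g b) :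
    ∑ t ∈ range (a * b), f t * g t = (∑ t ∈ range a, f t) * ∑ t ∈ range b, g t := by
  rcases Nat.eq_zero_or_pos a with rfl | ha
  · simp
  rcases Nat.eq_zero_or_pos b with rfl | hb
  · simp
  rw [sum_mul_sum, ← sum_product']
  refine sum_bij' (fun t _ ↦ (t % a, t % b))
    (fun p _ ↦ (Nat.chineseRemainder hab p.1 p.2 : ℕ)) (fun t _ ↦ ?_) (fun p _ ↦ ?_)
    (fun t ht ↦ ?_) (fun p hp ↦ ?_) (fun t _ ↦ ?_)
  · exact mk_mem_product (mem_range.2 (t.mod_lt ha)) (mem_range.2 (t.mod_lt hb))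
  · exact mem_range.2 (Nat.chineseRemainder_lt_mul hab _ _ ha.ne' hb.ne')
  · exact ((Nat.chineseRemainder_modEq_unique hab (t.mod_modEq a).symm
      (t.mod_modEq b).symm).eq_of_lt_of_lt (mem_range.1 ht)
      (Nat.chineseRemainder_lt_mul hab _ _ ha.ne' hb.ne')).symm
  · obtain ⟨h₁, h₂⟩ := mem_product.1 hp
    obtain ⟨h₁', h₂'⟩ := (Nat.chineseRemainder hab p.1 p.2).2
    exact Prod.ext (Eq.trans h₁' (Nat.mod_eq_of_lt (mem_range.1 h₁)))
      (Eq.trans h₂' (Nat.mod_eq_of_lt (mem_range.1 h₂)))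
  · rw [hf.map_mod_nat, hg.map_mod_nat]

lemma periodic_prod_of_periodic [CommMonoid R] {U : Finset ℕ} {v : ℕ → ℕ → R}
    {Q : ℕ} (hv : ∀ r ∈ U, Periodic (v r) r) (hQ : ∀ r ∈ U, r ∣ Q) :
    Periodic (fun t ↦ ∏ r ∈ U, v r t) Q := by
  refine fun t ↦ prod_congr rfl fun r hr ↦ ?_
  obtain ⟨c, rfl⟩ := hQ r hr
  simpa [mul_comm] using (hv r hr).nat_mul c t

lemma sum_range_prod_of_periodic [CommSemiring R] {U : Finset ℕ}
    (hU : (U : Set ℕ).Pairwise Nat.Coprime) {v : ℕ → ℕ → R} (hv : ∀ r ∈ U, Periodic (v r) r) :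
    ∑ t ∈ range (∏ r ∈ U, r), ∏ r ∈ U, v r t = ∏ r ∈ U, ∑ t ∈ range r, v r t := by
  induction U using Finset.induction_on with
  | empty => simp
  | insert p U hp ih =>
    rw [coe_insert, Set.pairwise_insert_of_symm] at hU
    rw [forall_mem_insert] at hv
    simp only [prod_insert hp]
    rw [← ih hU.1 hv.2]
    refine sum_range_mul_of_periodic (Nat.Coprime.prod_right fun r hr ↦ ?_) hv.1
      (periodic_prod_of_periodic hv.2 fun r hr ↦ dvd_prod_of_mem _ hr)
    exact hU.2 r hr fun h ↦ hp (h ▸ hr)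

lemma abs_sum_range_sub_le_of_periodic {Q : ℕ} (hQ : 0 < Q) {g : ℕ → ℝ} (hg : Periodic g Q)
    (X : ℕ) :
    |∑ t ∈ range X, g t - X / Q * ∑ t ∈ range Q, g t| ≤ ∑ t ∈ range Q, |g t| := by
  have hQ' : (0 : ℝ) < Q := by exact_mod_cast hQ
  induction X using Nat.strong_induction_on with
  | _ X ih =>
    rcases lt_or_ge X Q with h | h
    · have hX : (X : ℝ) / Q ∈ Set.Icc 0 1 :=
        ⟨by positivity, (div_le_one hQ').2 (by exact_mod_cast h.le)⟩
      have hsplit : ∑ t ∈ range X, g t = ∑ t ∈ range Q, if t < X then g t else 0 := by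
        rw [← sum_filter]
        congr 1
        ext t
        simp only [mem_range, mem_filter]
        omega
      rw [hsplit, mul_sum, ← sum_sub_distrib]
      refine (abs_sum_le_sum_abs _ _).trans (sum_le_sum fun t _ ↦ ?_)
      have habs : |(if t < X then (1 : ℝ) else 0) - X / Q| ≤ 1 := by
        split_ifs <;> rw [abs_le] <;> constructor <;> linarith [hX.1, hX.2]
      calc |(if t < X then g t else 0) - X / Q * g t|
          = |(if t < X then (1 : ℝ) else 0) - X / Q| * |g t| := by
            rw [← abs_mul]; split_ifs <;> ring_nf
        _ ≤ |g t| := mul_le_of_le_one_left (abs_nonneg _) habs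
    · obtain ⟨Y, rfl⟩ := Nat.exists_eq_add_of_le h
      convert ih Y (by omega) using 2
      have hshift : ∑ t ∈ range Y, g (Q + t) = ∑ t ∈ range Y, g t :=
        sum_congr rfl fun t _ ↦ by rw [add_comm, hg]
      rw [sum_range_add, hshift]
      push_cast
      field_simp
      ring

end PeriodicSums

section Sieve

/-- The function of mean zero modulo `r` which is constant on `Ω`, with value `-1`, and constant
off `Ω`. -/
noncomputable def balancedIndicator {r : ℕ} (Ω : Finset (ZMod r)) (t : ℕ) : ℝ :=
  if (t : ZMod r) ∈ Ω then -1 else #Ω / (r - #Ω)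

variable {r : ℕ} {Ω : Finset (ZMod r)}

lemma periodic_balancedIndicator : Periodic (balancedIndicator Ω) r := by
  simp [Periodic, balancedIndicator]

lemma sum_range_ite_mem (h : #Ω < r) (a b : ℝ) :
    ∑ t ∈ range r, (if (t : ZMod r) ∈ Ω then a else b) = #Ω * a + (r - #Ω) * b := by
  have : NeZero r := ⟨by omega⟩
  rw [sum_range_natCast_zmod r (fun t ↦ if t ∈ Ω then a else b), sum_ite]
  simp [filter_not, card_sdiff, Nat.cast_sub h.le, ZMod.card]

lemma sum_range_balancedIndicator (h : #Ω < r) : ∑ t ∈ range r, balancedIndicator Ω t = 0 := by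
  have : (0 : ℝ) < r - #Ω := sub_pos.2 (by exact_mod_cast h)
  simp only [balancedIndicator]
  rw [sum_range_ite_mem h]
  field_simp
  ring

lemma sum_range_balancedIndicator_sq (h : #Ω < r) :
    ∑ t ∈ range r, balancedIndicator Ω t ^ 2 = r * (#Ω / (r - #Ω)) := by
  have : (0 : ℝ) < r - #Ω := sub_pos.2 (by exact_mod_cast h)
  simp only [balancedIndicator, ite_pow]
  rw [sum_range_ite_mem h]
  field_simp
  ring

lemma abs_balancedIndicator_le (h : #Ω < r) (t : ℕ) : |balancedIndicator Ω t| ≤ r := by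
  have h₁ : (1 : ℝ) ≤ r - #Ω := by
    have : (#Ω : ℝ) + 1 ≤ r := by exact_mod_cast h
    linarith
  unfold balancedIndicator
  split_ifs
  · simp only [abs_neg, abs_one]
    linarith
  · rw [abs_of_nonneg (by positivity), div_le_iff₀ (by linarith)]
    nlinarith [(#Ω).cast_nonneg (α := ℝ)]

/-- The squarefree integers up to `z` with all prime factors in `P`, each encoded as the set of its
prime factors. -/
def sieveSupport (P : Finset ℕ) (z : ℕ) : Finset (Finset ℕ) :=
  {s ∈ P.powerset | ∏ p ∈ s, p ≤ z}

lemma mem_sieveSupport {P s : Finset ℕ} {z : ℕ} :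
    s ∈ sieveSupport P z ↔ s ⊆ P ∧ ∏ p ∈ s, p ≤ z := by
  simp [sieveSupport]

lemma card_sieveSupport_le {P : Finset ℕ} (hP : ∀ p ∈ P, p.Prime) (z : ℕ) :
    #(sieveSupport P z) ≤ z := by
  have hprime : ∀ s ∈ sieveSupport P z, ∀ p ∈ s, p.Prime :=
    fun s hs p hp ↦ hP p ((mem_sieveSupport.1 hs).1 hp)
  calc #(sieveSupport P z) ≤ #(Icc 1 z) := by
        refine card_le_card_of_injOn (fun s ↦ ∏ p ∈ s, p) (fun s hs ↦ ?_) fun s hs t ht hst ↦ ?_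
        · exact mem_Icc.2 ⟨prod_pos fun p hp ↦ (hprime s hs p hp).pos, (mem_sieveSupport.1 hs).2⟩
        · rw [← Nat.primeFactors_prod (hprime s hs), ← Nat.primeFactors_prod (hprime t ht)]
          exact congrArg _ hst
    _ = z := by simp

variable {P : Finset ℕ} {Ω : ∀ r : ℕ, Finset (ZMod r)}

lemma prod_union_le_of_mem_sieveSupport (hP : ∀ p ∈ P, p.Prime) {s s' : Finset ℕ} {z : ℕ}
    (hs : s ∈ sieveSupport P z) (hs' : s' ∈ sieveSupport P z) : ∏ p ∈ s ∪ s', p ≤ z * z := by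
  obtain ⟨hsP, hsz⟩ := mem_sieveSupport.1 hs
  calc ∏ p ∈ s ∪ s', p ≤ (∏ p ∈ s ∪ s', p) * ∏ p ∈ s ∩ s', p :=
        Nat.le_mul_of_pos_right _ <| prod_pos fun p hp ↦ (hP p (hsP (inter_subset_left hp))).pos
    _ = (∏ p ∈ s, p) * ∏ p ∈ s', p := prod_union_inter
    _ ≤ z * z := Nat.mul_le_mul hsz (mem_sieveSupport.1 hs').2

lemma abs_prod_balancedIndicator_le (hΩ : ∀ p ∈ P, #(Ω p) < p) {s : Finset ℕ} {z : ℕ}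
    (hs : s ∈ sieveSupport P z) (t : ℕ) : |∏ p ∈ s, balancedIndicator (Ω p) t| ≤ z := by
  obtain ⟨hsP, hsz⟩ := mem_sieveSupport.1 hs
  calc |∏ p ∈ s, balancedIndicator (Ω p) t| = ∏ p ∈ s, |balancedIndicator (Ω p) t| := abs_prod ..
    _ ≤ ∏ p ∈ s, (p : ℝ) := prod_le_prod (fun _ _ ↦ abs_nonneg _) fun p hp ↦
        abs_balancedIndicator_le (hΩ p (hsP hp)) t
    _ ≤ z := by rw [← Nat.cast_prod]; exact_mod_cast hsz

lemma sum_range_prod_balancedIndicator_mul (hP : ∀ p ∈ P, p.Prime) (hΩ : ∀ p ∈ P, #(Ω p) < p)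
    {s s' : Finset ℕ} (hs : s ⊆ P) (hs' : s' ⊆ P) :
    ∑ t ∈ range (∏ p ∈ s ∪ s', p),
      (∏ p ∈ s, balancedIndicator (Ω p) t) * ∏ p ∈ s', balancedIndicator (Ω p) t
        = if s = s' then ∏ p ∈ s, p * (#(Ω p) / (p - #(Ω p) : ℝ)) else 0 := by
  have hU : s ∪ s' ⊆ P := union_subset hs hs'
  have hcop : ((s ∪ s' : Finset ℕ) : Set ℕ).Pairwise Nat.Coprime := fun p hp q hq hpq ↦
    (Nat.coprime_primes (hP p (hU hp)) (hP q (hU hq))).2 hpq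
  let factor (u : Finset ℕ) (p t : ℕ) : ℝ := if p ∈ u then balancedIndicator (Ω p) t else 1
  have hper (u : Finset ℕ) (p : ℕ) : Periodic (factor u p) p := fun t ↦ by
    simp only [factor, periodic_balancedIndicator t]
  have hfactor (t : ℕ) :
      (∏ p ∈ s, balancedIndicator (Ω p) t) * ∏ p ∈ s', balancedIndicator (Ω p) t
        = ∏ p ∈ s ∪ s', factor s p t * factor s' p t := by
    simp only [factor, prod_mul_distrib, prod_ite_mem, union_inter_cancel_left,
      union_inter_cancel_right]
  simp only [hfactor]
  rw [sum_range_prod_of_periodic hcop (v := fun p t ↦ factor s p t * factor s' p t)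
    fun p _ ↦ (hper s p).mul (hper s' p)]
  split_ifs with h
  · subst h
    rw [union_idempotent]
    refine prod_congr rfl fun p hp ↦ ?_
    rw [← sum_range_balancedIndicator_sq (hΩ p (hs hp))]
    exact sum_congr rfl fun t _ ↦ by simp only [factor, if_pos hp, sq]
  · obtain ⟨p, hp⟩ := symmDiff_nonempty.2 h
    have hpU : p ∈ s ∪ s' := mem_union.2 ((mem_symmDiff.1 hp).imp And.left And.left)
    refine prod_eq_zero hpU ?_
    rw [← sum_range_balancedIndicator (hΩ p (hU hpU))]
    rcases mem_symmDiff.1 hp with hp | hp <;> simp [factor, hp.1, hp.2]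

lemma sum_range_prod_balancedIndicator_mul_le (hP : ∀ p ∈ P, p.Prime)
    (hΩ : ∀ p ∈ P, #(Ω p) < p) {s s' : Finset ℕ} {z : ℕ} (hs : s ∈ sieveSupport P z)
    (hs' : s' ∈ sieveSupport P z) (X : ℕ) :
    ∑ t ∈ range X, (∏ p ∈ s, balancedIndicator (Ω p) t) * ∏ p ∈ s', balancedIndicator (Ω p) t
      ≤ (if s = s' then X * ∏ p ∈ s, (#(Ω p) / (p - #(Ω p) : ℝ)) else 0) + z ^ 4 := by
  have hsP := (mem_sieveSupport.1 hs).1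
  have hsP' := (mem_sieveSupport.1 hs').1
  have hprime : ∀ p ∈ s ∪ s', p.Prime := fun p hp ↦ hP p (union_subset hsP hsP' hp)
  set Q := ∏ p ∈ s ∪ s', p with hQ
  have hQ0 : 0 < Q := prod_pos fun p hp ↦ (hprime p hp).pos
  have hQz : Q ≤ z * z := prod_union_le_of_mem_sieveSupport hP hs hs'
  set f : ℕ → ℝ := fun t ↦
    (∏ p ∈ s, balancedIndicator (Ω p) t) * ∏ p ∈ s', balancedIndicator (Ω p) t with hf
  have hper : Periodic f Q :=
    (periodic_prod_of_periodic (fun _ _ ↦ periodic_balancedIndicator) fun p hp ↦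
      dvd_prod_of_mem _ (mem_union_left _ hp)).mul
    (periodic_prod_of_periodic (fun _ _ ↦ periodic_balancedIndicator) fun p hp ↦
      dvd_prod_of_mem _ (mem_union_right _ hp))
  have hfz (t : ℕ) : |f t| ≤ z * z := by
    rw [hf, abs_mul]
    exact mul_le_mul (abs_prod_balancedIndicator_le hΩ hs t)
      (abs_prod_balancedIndicator_le hΩ hs' t) (abs_nonneg _) (by positivity)
  have hmain : (X : ℝ) / Q * ∑ t ∈ range Q, f t
      = if s = s' then X * ∏ p ∈ s, (#(Ω p) / (p - #(Ω p) : ℝ)) else 0 := by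
    rw [hf, hQ, sum_range_prod_balancedIndicator_mul hP hΩ hsP hsP']
    split_ifs with h
    · have : (Q : ℝ) ≠ 0 := by exact_mod_cast hQ0.ne'
      subst h
      rw [union_idempotent] at hQ ⊢
      rw [prod_mul_distrib, ← Nat.cast_prod, ← hQ, ← mul_assoc, div_mul_cancel₀ _ this]
    · simp
  have herr : ∑ t ∈ range Q, |f t| ≤ z ^ 4 := by
    calc ∑ t ∈ range Q, |f t| ≤ ∑ _ ∈ range Q, (z * z : ℝ) := sum_le_sum fun t _ ↦ hfz t
      _ = Q * (z * z) := by simp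
      _ ≤ (z * z : ℕ) * (z * z) := by gcongr
      _ = z ^ 4 := by push_cast; ring
  have := (abs_le.1 (abs_sum_range_sub_le_of_periodic hQ0 hper X)).2
  linarith

lemma card_mul_sq_le_of_quasiorthogonal {α ι : Type*} [DecidableEq ι] {L : Finset ι}
    {T A : Finset α} (hAT : A ⊆ T) {F : ι → α → ℝ} {h : ι → ℝ} {c E : ℝ}
    (hF : ∀ i ∈ L, ∀ j ∈ L, ∑ t ∈ T, F i t * F j t ≤ (if i = j then c * h i else 0) + E)
    (hA : ∀ i ∈ L, ∀ t ∈ A, F i t = h i) :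
    #A * (∑ i ∈ L, h i) ^ 2 ≤ c * ∑ i ∈ L, h i + #L ^ 2 * E := by
  calc (#A : ℝ) * (∑ i ∈ L, h i) ^ 2 = ∑ t ∈ A, (∑ i ∈ L, F i t) ^ 2 := by
        rw [← nsmul_eq_mul, ← sum_const]
        exact sum_congr rfl fun t ht ↦ by rw [sum_congr rfl fun i hi ↦ hA i hi t ht]
    _ ≤ ∑ t ∈ T, (∑ i ∈ L, F i t) ^ 2 :=
        sum_le_sum_of_subset_of_nonneg hAT fun _ _ _ ↦ sq_nonneg _
    _ = ∑ i ∈ L, ∑ j ∈ L, ∑ t ∈ T, F i t * F j t := by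
        simp only [sq, sum_mul_sum]
        rw [sum_comm]
        exact sum_congr rfl fun i _ ↦ sum_comm
    _ ≤ ∑ i ∈ L, ∑ j ∈ L, ((if i = j then c * h i else 0) + E) :=
        sum_le_sum fun i hi ↦ sum_le_sum fun j hj ↦ hF i hi j hj
    _ = c * ∑ i ∈ L, h i + #L ^ 2 * E := by
        simp only [sum_add_distrib, sum_ite_eq, sum_ite_mem, inter_self, sum_const, nsmul_eq_mul,
          ← mul_sum]
        ring

/-- The quantity `∑ ∏ |Ω p| / (p - |Ω p|)` over the squarefree integers of `sieveSupport P z`, the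
reciprocal of which is the proportion of integers surviving the sieve. -/
noncomputable def sieveDensity (Ω : ∀ r : ℕ, Finset (ZMod r)) (P : Finset ℕ) (z : ℕ) : ℝ :=
  ∑ s ∈ sieveSupport P z, ∏ p ∈ s, (#(Ω p) / (p - #(Ω p)) : ℝ)

lemma prod_card_div_sub_card_nonneg (hΩ : ∀ p ∈ P, #(Ω p) < p) {s : Finset ℕ} (hs : s ⊆ P) :
    0 ≤ ∏ p ∈ s, (#(Ω p) / (p - #(Ω p)) : ℝ) :=
  prod_nonneg fun p hp ↦ div_nonneg (Nat.cast_nonneg _)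
    (sub_nonneg.2 (by exact_mod_cast (hΩ p (hs hp)).le))

lemma one_le_sieveDensity (hΩ : ∀ p ∈ P, #(Ω p) < p) {z : ℕ} (hz : 1 ≤ z) :
    1 ≤ sieveDensity Ω P z := by
  refine (prod_empty.symm.le).trans <|
    single_le_sum (f := fun s ↦ ∏ p ∈ s, (#(Ω p) / (p - #(Ω p)) : ℝ)) (fun s hs ↦ ?_)
      (mem_sieveSupport.2 ⟨empty_subset P, by simpa using hz⟩)
  exact prod_card_div_sub_card_nonneg hΩ (mem_sieveSupport.1 hs).1

/- Compare `∑ t ∈ A` and `∑ t ∈ range X` of `(∑ s ∈ sieveSupport P z, ∏ p ∈ s, balancedIndicator)²`: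
on `A` the inner sum equals the sieve density, and over `range X` its terms are almost
orthogonal. -/
theorem card_le_div_sieveDensity_add (hP : ∀ p ∈ P, p.Prime) (hΩ : ∀ p ∈ P, #(Ω p) < p)
    {z X : ℕ} (hz : 1 ≤ z) {A : Finset ℕ} (hAX : A ⊆ range X)
    (hA : ∀ t ∈ A, ∀ p ∈ P, (t : ZMod p) ∉ Ω p) :
    #A ≤ X / sieveDensity Ω P z + z ^ 6 := by
  have hS := one_le_sieveDensity hΩ hz
  have hcard : (#(sieveSupport P z) : ℝ) ≤ z := by exact_mod_cast card_sieveSupport_le hP z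
  have hquasi : #A * sieveDensity Ω P z ^ 2
      ≤ X * sieveDensity Ω P z + #(sieveSupport P z) ^ 2 * (z : ℝ) ^ 4 := by
    refine card_mul_sq_le_of_quasiorthogonal hAX
      (fun s hs s' hs' ↦ sum_range_prod_balancedIndicator_mul_le hP hΩ hs hs' X)
      fun s hs t ht ↦ prod_congr rfl fun p hp ↦ ?_
    exact if_neg (hA t ht p ((mem_sieveSupport.1 hs).1 hp))
  calc (#A : ℝ) = #A * sieveDensity Ω P z ^ 2 / sieveDensity Ω P z ^ 2 := by field_simp
    _ ≤ (X * sieveDensity Ω P z + z ^ 2 * (z : ℝ) ^ 4) / sieveDensity Ω P z ^ 2 := by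
        gcongr
        exact hquasi.trans (by gcongr)
    _ = X / sieveDensity Ω P z + z ^ 6 / sieveDensity Ω P z ^ 2 := by field_simp
    _ ≤ X / sieveDensity Ω P z + z ^ 6 := by
        gcongr
        exact div_le_self (by positivity) (one_le_pow₀ hS)

end Sieve

section SieveDensityLowerBound

lemma sum_le_sum_of_injOn {α β : Type*} {s : Finset α} {t : Finset β} {f : α → ℝ}
    {g : β → ℝ} (φ : α → β) (hφ : ∀ a ∈ s, φ a ∈ t) (hinj : Set.InjOn φ s)
    (hfg : ∀ a ∈ s, f a ≤ g (φ a)) (hg : ∀ b ∈ t, 0 ≤ g b) : ∑ a ∈ s, f a ≤ ∑ b ∈ t, g b := by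
  classical
  calc ∑ a ∈ s, f a ≤ ∑ a ∈ s, g (φ a) := sum_le_sum hfg
    _ = ∑ b ∈ s.image φ, g b := (sum_image hinj).symm
    _ ≤ ∑ b ∈ t, g b := sum_le_sum_of_subset_of_nonneg (image_subset_iff.2 hφ) fun b hb _ ↦ hg b hb

lemma sum_prod_pow_factorization_le_prod {x : ℕ → ℝ} {s : Finset ℕ}
    (hx0 : ∀ p ∈ s, 0 ≤ x p) (hx1 : ∀ p ∈ s, x p < 1) (z : ℕ) :
    ∑ m ∈ Icc 1 z with m.primeFactors = s, ∏ p ∈ s, x p ^ m.factorization p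
      ≤ ∏ p ∈ s, x p / (1 - x p) := by
  calc ∑ m ∈ Icc 1 z with m.primeFactors = s, ∏ p ∈ s, x p ^ m.factorization p
      ≤ ∑ e ∈ s.pi fun _ ↦ Ico 1 (z + 1), ∏ p ∈ s.attach, x p ^ e p.1 p.2 := by
        refine sum_le_sum_of_injOn (fun m p _ ↦ m.factorization p)
          (fun m hm ↦ mem_pi.2 fun p hp ↦ ?_) (fun m hm m' hm' h ↦ ?_)
          (fun m _ ↦ (prod_attach s fun p ↦ x p ^ m.factorization p).ge)
          fun e _ ↦ prod_nonneg fun p _ ↦ pow_nonneg (hx0 p p.2) _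
        · obtain ⟨hmz, rfl⟩ := mem_filter.1 hm
          obtain ⟨hm1, hmz⟩ := mem_Icc.1 hmz
          have hpm := Nat.dvd_of_mem_primeFactors hp
          have hpp := Nat.prime_of_mem_primeFactors hp
          have := (hpp.dvd_iff_one_le_factorization (by omega)).1 hpm
          have := Nat.factorization_lt p (by omega : m ≠ 0)
          exact mem_Ico.2 (by omega)
        · simp only [coe_filter, mem_Icc, Set.mem_ofPred_eq] at hm hm'
          refine Nat.eq_of_factorization_eq (by omega) (by omega) fun p ↦ ?_
          by_cases hp : p ∈ s
          · exact congrFun (congrFun h p) hp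
          · rw [Finsupp.notMem_support_iff.1 (by rwa [Nat.support_factorization, hm.2]),
              Finsupp.notMem_support_iff.1 (by rwa [Nat.support_factorization, hm'.2])]
    _ = ∏ p ∈ s, ∑ e ∈ Ico 1 (z + 1), x p ^ e := (prod_sum s _ fun p e ↦ x p ^ e).symm
    _ ≤ ∏ p ∈ s, x p / (1 - x p) := by
        refine prod_le_prod (fun p hp ↦ sum_nonneg fun e _ ↦ pow_nonneg (hx0 p hp) e) fun p hp ↦ ?_
        simpa using geom_sum_Ico_le_of_lt_one (m := 1) (n := z + 1) (hx0 p hp) (hx1 p hp)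

lemma sum_prod_pow_factorization_le {x : ℕ → ℝ} {P : Finset ℕ}
    (hx0 : ∀ p ∈ P, 0 ≤ x p) (hx1 : ∀ p ∈ P, x p < 1) (z : ℕ) :
    ∑ m ∈ Icc 1 z with m.primeFactors ⊆ P, ∏ p ∈ m.primeFactors, x p ^ m.factorization p
      ≤ ∑ s ∈ sieveSupport P z, ∏ p ∈ s, x p / (1 - x p) := by
  rw [← sum_fiberwise_of_maps_to (g := Nat.primeFactors) (t := sieveSupport P z)]
  · refine sum_le_sum fun s hs ↦ ?_
    have hsP := (mem_sieveSupport.1 hs).1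
    refine le_trans (Eq.le ?_) <| sum_prod_pow_factorization_le_prod
      (fun p hp ↦ hx0 p (hsP hp)) (fun p hp ↦ hx1 p (hsP hp)) z
    refine sum_congr (by grind) fun m hm ↦ ?_
    rw [(mem_filter.1 hm).2]
  · intro m hm
    obtain ⟨hmz, hmP⟩ := mem_filter.1 hm
    obtain ⟨hm1, hmz⟩ := mem_Icc.1 hmz
    exact mem_sieveSupport.2 ⟨hmP, (Nat.le_of_dvd hm1 (Nat.prod_primeFactors_dvd m)).trans hmz⟩

open ArithmeticFunction (cardFactors)

lemma prod_div_pow_factorization (k : ℕ) {m : ℕ} (hm : m ≠ 0) :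
    ∏ p ∈ m.primeFactors, (k / p : ℝ) ^ m.factorization p = k ^ cardFactors m / m := by
  have hprod : ∏ p ∈ m.primeFactors, (p : ℝ) ^ m.factorization p = m := by
    exact_mod_cast Nat.prod_factorization_pow_eq_self hm
  simp only [div_pow, prod_div_distrib]
  rw [hprod, prod_pow_eq_pow_sum, ArithmeticFunction.cardFactors_eq_sum_factorization]
  rfl

lemma sum_pow_cardFactors_div_le_sieveDensity {Ω : ∀ r : ℕ, Finset (ZMod r)} {P : Finset ℕ} {k : ℕ}
    (hΩ : ∀ p ∈ P, #(Ω p) = k) (hk : ∀ p ∈ P, k < p) (z : ℕ) :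
    ∑ m ∈ Icc 1 z with m.primeFactors ⊆ P, (k ^ cardFactors m / m : ℝ) ≤ sieveDensity Ω P z := by
  have hk' : ∀ p ∈ P, (k : ℝ) < p := fun p hp ↦ by exact_mod_cast hk p hp
  have hp0 : ∀ p ∈ P, (0 : ℝ) < p := fun p hp ↦ by exact_mod_cast (hk p hp).pos
  calc ∑ m ∈ Icc 1 z with m.primeFactors ⊆ P, (k ^ cardFactors m / m : ℝ)
      = ∑ m ∈ Icc 1 z with m.primeFactors ⊆ P,
          ∏ p ∈ m.primeFactors, (k / p : ℝ) ^ m.factorization p :=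
        sum_congr rfl fun m hm ↦
          (prod_div_pow_factorization k
            (Nat.pos_iff_ne_zero.1 (mem_Icc.1 (mem_filter.1 hm).1).1)).symm
    _ ≤ ∑ s ∈ sieveSupport P z, ∏ p ∈ s, (k / p : ℝ) / (1 - k / p) :=
        sum_prod_pow_factorization_le (fun p _ ↦ by positivity)
          (fun p hp ↦ (div_lt_one (hp0 p hp)).2 (hk' p hp)) z
    _ = sieveDensity Ω P z := by
        refine sum_congr rfl fun s hs ↦ prod_congr rfl fun p hp ↦ ?_
        have hpP := (mem_sieveSupport.1 hs).1 hp
        have := hp0 p hpP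
        have := sub_pos.2 (hk' p hpP)
        rw [hΩ p hpP]
        field_simp

lemma sum_divisors_pow_cardFactors_le (k m : ℕ) :
    ∑ d ∈ m.divisors, k ^ cardFactors d ≤ (k + 1) ^ cardFactors m := by
  induction m using Nat.recOnMul with
  | zero => simp
  | one => simp
  | prime p hp => simp [hp.sum_divisors, ArithmeticFunction.cardFactors_apply_prime hp]
  | mul a b iha ihb =>
    rcases eq_or_ne a 0 with rfl | ha
    · simp
    rcases eq_or_ne b 0 with rfl | hb
    · simp
    calc ∑ d ∈ (a * b).divisors, k ^ cardFactors d
        ≤ ∑ d ∈ a.divisors ×ˢ b.divisors, k ^ cardFactors (d.1 * d.2) := by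
          rw [Nat.divisors_mul]
          exact sum_image_le_of_nonneg fun _ _ ↦ Nat.zero_le _
      _ = (∑ d ∈ a.divisors, k ^ cardFactors d) * ∑ e ∈ b.divisors, k ^ cardFactors e := by
          rw [sum_mul_sum, ← sum_product']
          refine sum_congr rfl fun d hd ↦ ?_
          obtain ⟨h₁, h₂⟩ := mem_product.1 hd
          rw [ArithmeticFunction.cardFactors_mul (Nat.pos_of_mem_divisors h₁).ne'
            (Nat.pos_of_mem_divisors h₂).ne', pow_add]
      _ ≤ (k + 1) ^ cardFactors (a * b) := by
          rw [ArithmeticFunction.cardFactors_mul ha hb, pow_add]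
          exact Nat.mul_le_mul iha ihb

/-- The sum of `1 / m` over the integers `1 ≤ m ≤ y` coprime to `B`. -/
noncomputable def coprimeHarmonic (B y : ℕ) : ℝ := ∑ m ∈ Icc 1 y with m.Coprime B, (1 / m : ℝ)

lemma coprimeHarmonic_pow_le (B y k : ℕ) :
    coprimeHarmonic B y ^ k
      ≤ ∑ m ∈ Icc 1 (y ^ k) with m.Coprime B, (k ^ cardFactors m / m : ℝ) := by
  induction k with
  | zero => simp [sum_filter]
  | succ k ih =>
    set S := {m ∈ Icc 1 (y ^ k) | m.Coprime B}
    set T := {m ∈ Icc 1 y | m.Coprime B}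
    set U := {m ∈ Icc 1 (y ^ (k + 1)) | m.Coprime B} with hU
    have hmaps : ∀ q ∈ S ×ˢ T, q.1 * q.2 ∈ U := by
      simp only [S, T, hU, mem_product, mem_filter, mem_Icc, pow_succ]
      rintro q ⟨⟨⟨h₁, h₂⟩, h₃⟩, ⟨h₄, h₅⟩, h₆⟩
      exact ⟨⟨Nat.mul_pos h₁ h₄, Nat.mul_le_mul h₂ h₅⟩, h₃.mul_left h₆⟩
    calc coprimeHarmonic B y ^ (k + 1)
        ≤ (∑ m ∈ S, (k ^ cardFactors m / m : ℝ)) * ∑ m ∈ T, (1 / m : ℝ) := by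
          rw [pow_succ]
          exact mul_le_mul_of_nonneg_right ih (sum_nonneg fun _ _ ↦ by positivity)
      _ = ∑ m ∈ U, ∑ q ∈ S ×ˢ T with q.1 * q.2 = m, (k ^ cardFactors q.1 / m : ℝ) := by
          rw [sum_mul_sum, ← sum_product', ← sum_fiberwise_of_maps_to hmaps]
          refine sum_congr rfl fun m _ ↦ sum_congr rfl fun q hq ↦ ?_
          rw [← (mem_filter.1 hq).2, div_mul_div_comm, mul_one, Nat.cast_mul]
      _ ≤ ∑ m ∈ U, ∑ d ∈ m.divisors, (k ^ cardFactors d / m : ℝ) := by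
          refine sum_le_sum fun m hm ↦ sum_le_sum_of_injOn Prod.fst (fun q hq ↦ ?_)
            (fun q hq q' hq' h ↦ ?_) (fun q _ ↦ le_rfl) fun d _ ↦ by positivity
          · have := (mem_Icc.1 (mem_filter.1 hm).1).1
            exact Nat.mem_divisors.2 ⟨Dvd.intro _ (mem_filter.1 hq).2, by omega⟩
          · obtain ⟨hq, hqm⟩ := mem_filter.1 hq
            have hqm' := (mem_filter.1 hq').2
            have := (mem_Icc.1 (mem_filter.1 (mem_product.1 hq).1).1).1
            refine Prod.ext h (Nat.eq_of_mul_eq_mul_left this ?_)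
            rw [hqm, h, hqm']
      _ ≤ ∑ m ∈ U, ((k + 1 : ℕ) ^ cardFactors m / m : ℝ) := by
          refine sum_le_sum fun m _ ↦ ?_
          rw [← sum_div]
          gcongr
          exact_mod_cast sum_divisors_pow_cardFactors_le k m

lemma prod_primeFactors_one_add_inv_div_one_sub_inv {B : ℕ} (hB : B ≠ 0) :
    ∏ p ∈ B.primeFactors, (1 + (p : ℝ)⁻¹ / (1 - (p : ℝ)⁻¹)) = B / B.totient := by
  have hB' : (B : ℝ) ≠ 0 := by exact_mod_cast hB
  have htot : (B.totient : ℝ) = B * ∏ p ∈ B.primeFactors, (1 - (p : ℝ)⁻¹) := by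
    have := congrArg (Rat.cast (K := ℝ)) (Nat.totient_eq_mul_prod_factors B)
    push_cast at this
    exact this
  rw [htot, div_mul_cancel_left₀ hB', ← prod_inv_distrib]
  refine prod_congr rfl fun p hp ↦ ?_
  have : (1 : ℝ) < p := by exact_mod_cast (Nat.prime_of_mem_primeFactors hp).one_lt
  have : (p : ℝ) - 1 ≠ 0 := by linarith
  field_simp
  ring

lemma exists_eq_mul_primeFactors_subset_coprime {B m : ℕ} (hB : B ≠ 0) (hm : m ≠ 0) :
    ∃ d e : ℕ, m = d * e ∧ d.primeFactors ⊆ B.primeFactors ∧ e.Coprime B := by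
  induction m using induction_on_primes with
  | zero => exact absurd rfl hm
  | one => exact ⟨1, 1, by simp⟩
  | prime_mul p a hp ih =>
    have ha : a ≠ 0 := right_ne_zero_of_mul hm
    obtain ⟨d, e, rfl, hd, he⟩ := ih ha
    have hd0 : d ≠ 0 := left_ne_zero_of_mul ha
    by_cases hpB : p ∈ B.primeFactors
    · refine ⟨p * d, e, (mul_assoc ..).symm, ?_, he⟩
      rw [Nat.primeFactors_mul hp.ne_zero hd0, hp.primeFactors]
      exact union_subset (singleton_subset_iff.2 hpB) hd
    · refine ⟨d, p * e, mul_left_comm .., hd, Nat.Coprime.mul_left ?_ he⟩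
      exact (Nat.Prime.coprime_iff_not_dvd hp).2 fun h ↦ hpB (hp.mem_primeFactors h hB)

lemma sum_inv_primeFactors_subset_le {B : ℕ} (hB : B ≠ 0) (y : ℕ) :
    ∑ d ∈ Icc 1 y with d.primeFactors ⊆ B.primeFactors, (1 / d : ℝ) ≤ B / B.totient := by
  have hx : ∀ p ∈ B.primeFactors, (p : ℝ)⁻¹ < 1 := fun p hp ↦
    inv_lt_one_of_one_lt₀ (by exact_mod_cast (Nat.prime_of_mem_primeFactors hp).one_lt)
  calc ∑ d ∈ Icc 1 y with d.primeFactors ⊆ B.primeFactors, (1 / d : ℝ)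
      = ∑ d ∈ Icc 1 y with d.primeFactors ⊆ B.primeFactors,
          ∏ p ∈ d.primeFactors, (p : ℝ)⁻¹ ^ d.factorization p := by
        refine sum_congr rfl fun d hd ↦ ?_
        have hd0 := Nat.pos_iff_ne_zero.1 (mem_Icc.1 (mem_filter.1 hd).1).1
        simpa using (prod_div_pow_factorization 1 hd0).symm
    _ ≤ ∑ s ∈ sieveSupport B.primeFactors y, ∏ p ∈ s, (p : ℝ)⁻¹ / (1 - (p : ℝ)⁻¹) :=
        sum_prod_pow_factorization_le (fun p _ ↦ by positivity) hx y
    _ ≤ ∑ s ∈ B.primeFactors.powerset, ∏ p ∈ s, (p : ℝ)⁻¹ / (1 - (p : ℝ)⁻¹) := by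
        refine sum_le_sum_of_subset_of_nonneg (filter_subset _ _) fun s hs _ ↦
          prod_nonneg fun p hp ↦ div_nonneg (by positivity) ?_
        linarith [hx p (mem_powerset.1 hs hp)]
    _ = B / B.totient := by
        rw [← prod_one_add, prod_primeFactors_one_add_inv_div_one_sub_inv hB]

theorem log_add_one_le_coprimeHarmonic {B : ℕ} (hB : B ≠ 0) (y : ℕ) :
    log (y + 1 : ℕ) ≤ B / B.totient * coprimeHarmonic B y := by
  have hsplit : ∀ m ∈ Icc 1 y, ∃ q : ℕ × ℕ,
      m = q.1 * q.2 ∧ q.1.primeFactors ⊆ B.primeFactors ∧ q.2.Coprime B := fun m hm ↦ by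
    obtain ⟨d, e, h⟩ := exists_eq_mul_primeFactors_subset_coprime hB
      (Nat.pos_iff_ne_zero.1 (mem_Icc.1 hm).1)
    exact ⟨(d, e), h⟩
  choose! φ hφ hφB hφcop using hsplit
  calc log (y + 1 : ℕ) ≤ harmonic y := log_add_one_le_harmonic y
    _ = ∑ m ∈ Icc 1 y, (1 / m : ℝ) := by simp [harmonic_eq_sum_Icc]
    _ ≤ ∑ q ∈ {d ∈ Icc 1 y | d.primeFactors ⊆ B.primeFactors} ×ˢ {e ∈ Icc 1 y | e.Coprime B},
          (1 / q.1 * (1 / q.2) : ℝ) := by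
        refine sum_le_sum_of_injOn φ (fun m hm ↦ ?_) (fun m hm m' hm' h ↦ ?_) (fun m hm ↦ ?_)
          fun q _ ↦ by positivity
        · obtain ⟨hm1, hmy⟩ := mem_Icc.1 hm
          have hd : (φ m).1 ∣ m := Dvd.intro _ (hφ m hm).symm
          have he : (φ m).2 ∣ m := Dvd.intro_left _ (hφ m hm).symm
          simp only [mem_product, mem_filter, mem_Icc]
          exact ⟨⟨⟨Nat.pos_of_dvd_of_pos hd hm1, (Nat.le_of_dvd hm1 hd).trans hmy⟩, hφB m hm⟩,
            ⟨Nat.pos_of_dvd_of_pos he hm1, (Nat.le_of_dvd hm1 he).trans hmy⟩, hφcop m hm⟩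
        · rw [hφ m hm, hφ m' hm', h]
        · conv_lhs => rw [hφ m hm, Nat.cast_mul, ← one_div_mul_one_div]
    _ = (∑ d ∈ Icc 1 y with d.primeFactors ⊆ B.primeFactors, (1 / d : ℝ))
          * coprimeHarmonic B y := by rw [coprimeHarmonic, sum_mul_sum, ← sum_product']
    _ ≤ B / B.totient * coprimeHarmonic B y :=
        mul_le_mul_of_nonneg_right (sum_inv_primeFactors_subset_le hB y)
          (sum_nonneg fun _ _ ↦ by positivity)

end SieveDensityLowerBound

section SiftedSets

lemma exists_pow_le_lt_succ_pow {n X : ℕ} (hn : n ≠ 0) (hX : X ≠ 0) :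
    ∃ y, 1 ≤ y ∧ y ^ n ≤ X ∧ X < (y + 1) ^ n := by
  have hP : ∃ y, X < (y + 1) ^ n := ⟨X, (Nat.lt_succ_self X).trans_le (Nat.le_self_pow hn _)⟩
  have h0 : Nat.find hP ≠ 0 := fun h ↦ by
    have := Nat.find_spec hP
    simp only [h, zero_add, one_pow] at this
    omega
  refine ⟨Nat.find hP, Nat.one_le_iff_ne_zero.2 h0, ?_, Nat.find_spec hP⟩
  have := Nat.find_min hP (Nat.sub_lt (Nat.pos_of_ne_zero h0) one_pos)
  rwa [not_lt, Nat.sub_one_add_one h0] at this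

/-- The primes up to `z` by which a set is sifted when those dividing `B` are left out. -/
def siftingPrimes (B z : ℕ) : Finset ℕ := {p ∈ Icc 1 z | p.Prime ∧ ¬p ∣ B}

lemma mem_siftingPrimes {B z p : ℕ} : p ∈ siftingPrimes B z ↔ p.Prime ∧ ¬p ∣ B ∧ p ≤ z := by
  simp only [siftingPrimes, mem_filter, mem_Icc]
  exact ⟨fun h ↦ ⟨h.2.1, h.2.2, h.1.2⟩, fun h ↦ ⟨⟨h.1.pos, h.2.2⟩, h.1, h.2.1⟩⟩

variable {Ω : ∀ r : ℕ, Finset (ZMod r)} {B k : ℕ}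

lemma log_pow_le_sieveDensity (hB : B ≠ 0) (hΩ : ∀ p : ℕ, p.Prime → ¬p ∣ B → #(Ω p) = k)
    (hk : ∀ p : ℕ, p.Prime → ¬p ∣ B → k < p) (y : ℕ) :
    log (y + 1 : ℕ) ^ k
      ≤ (B / B.totient) ^ k * sieveDensity Ω (siftingPrimes B (y ^ k)) (y ^ k) := by
  have hsub : {m ∈ Icc 1 (y ^ k) | m.Coprime B}
      ⊆ {m ∈ Icc 1 (y ^ k) | m.primeFactors ⊆ siftingPrimes B (y ^ k)} := by
    refine fun m hm ↦ mem_filter.2 ⟨(mem_filter.1 hm).1, fun p hp ↦ ?_⟩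
    obtain ⟨hmz, hmB⟩ := mem_filter.1 hm
    obtain ⟨hm1, hmz⟩ := mem_Icc.1 hmz
    have hpp := Nat.prime_of_mem_primeFactors hp
    have hpm := Nat.dvd_of_mem_primeFactors hp
    exact mem_siftingPrimes.2 ⟨hpp, hpp.coprime_iff_not_dvd.1 (hmB.coprime_dvd_left hpm),
      (Nat.le_of_dvd hm1 hpm).trans hmz⟩
  calc log (y + 1 : ℕ) ^ k ≤ (B / B.totient * coprimeHarmonic B y) ^ k :=
        pow_le_pow_left₀ (log_natCast_nonneg _) (log_add_one_le_coprimeHarmonic hB y) k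
    _ = (B / B.totient) ^ k * coprimeHarmonic B y ^ k := mul_pow ..
    _ ≤ (B / B.totient) ^ k * sieveDensity Ω (siftingPrimes B (y ^ k)) (y ^ k) := by
        gcongr
        refine (coprimeHarmonic_pow_le B y k).trans <|
          (sum_le_sum_of_subset_of_nonneg hsub fun _ _ _ ↦ by positivity).trans <|
          sum_pow_cardFactors_div_le_sieveDensity (fun p hp ↦ ?_) (fun p hp ↦ ?_) (y ^ k)
        all_goals obtain ⟨hp, hpB, -⟩ := mem_siftingPrimes.1 hp
        exacts [hΩ p hp hpB, hk p hp hpB]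

variable {X : ℕ} {A : Finset ℕ}

lemma card_le_div_sieveDensity_siftingPrimes_add (hΩ : ∀ p : ℕ, p.Prime → ¬p ∣ B → #(Ω p) < p)
    (hAX : A ⊆ range X)
    (hA : ∀ t ∈ A, ∀ p : ℕ, p.Prime → ¬p ∣ B → p < t → (t : ZMod p) ∉ Ω p) {z : ℕ} (hz : 1 ≤ z) :
    #A ≤ X / sieveDensity Ω (siftingPrimes B z) z + 3 * z ^ 6 := by
  have hsmall : #{t ∈ A | t ≤ z} ≤ z + 1 := by
    simpa using card_le_card (t := range (z + 1)) fun t ht ↦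
      mem_range.2 (Nat.lt_succ_of_le (mem_filter.1 ht).2)
  have hlarge : (#{t ∈ A | ¬t ≤ z} : ℝ) ≤ X / sieveDensity Ω (siftingPrimes B z) z + z ^ 6 := by
    refine card_le_div_sieveDensity_add (fun p hp ↦ (mem_siftingPrimes.1 hp).1) (fun p hp ↦ ?_) hz
      ((filter_subset _ _).trans hAX) fun t ht p hp ↦ ?_
    · exact hΩ p (mem_siftingPrimes.1 hp).1 (mem_siftingPrimes.1 hp).2.1
    · obtain ⟨hp, hpB, hpz⟩ := mem_siftingPrimes.1 hp
      obtain ⟨htA, htz⟩ := mem_filter.1 ht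
      exact hA t htA p hp hpB (hpz.trans_lt (not_le.1 htz))
  have hsmall' : (#{t ∈ A | t ≤ z} : ℝ) ≤ 2 * z ^ 6 := by
    have := Nat.le_self_pow (n := 6) (by norm_num) z
    exact_mod_cast (by omega : #{t ∈ A | t ≤ z} ≤ 2 * z ^ 6)
  rw [← card_filter_add_card_filter_not (s := A) (· ≤ z)]
  push_cast
  linarith

lemma log_add_one_le_mul_log {X Y n : ℕ} (h : X < Y ^ n) : log (X + 1 : ℕ) ≤ n * log Y :=
  calc log (X + 1 : ℕ) ≤ log (Y ^ n : ℕ) := log_le_log (by positivity) (by exact_mod_cast h)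
    _ = n * log Y := by simp

lemma one_le_div_totient {B : ℕ} (hB : B ≠ 0) : 1 ≤ (B / B.totient : ℝ) := by
  refine (one_le_div ?_).2 (by exact_mod_cast Nat.totient_le B)
  exact_mod_cast Nat.totient_pos.2 (Nat.pos_of_ne_zero hB)

lemma log_add_one_pow_le {X y k : ℕ} (hXy : X < (y + 1) ^ (8 * k)) :
    log (X + 1 : ℕ) ^ k ≤ (8 * k) ^ k * log (y + 1 : ℕ) ^ k := by
  rw [← mul_pow]
  exact pow_le_pow_left₀ (log_natCast_nonneg _) (by exact_mod_cast log_add_one_le_mul_log hXy) k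

lemma pow_six_mul_log_add_one_pow_le {X y k : ℕ} (hy : 1 ≤ y) (hyX : y ^ (8 * k) ≤ X)
    (hXy : X < (y + 1) ^ (8 * k)) :
    (y ^ k : ℕ) ^ 6 * log (X + 1 : ℕ) ^ k ≤ (8 * k) ^ k * X := by
  have hlogy : log (y + 1 : ℕ) ≤ y := by
    simpa using log_le_sub_one_of_pos (x := (y + 1 : ℕ)) (by positivity)
  have hyX' : (y ^ k : ℕ) ^ 6 * (y : ℝ) ^ k ≤ X := by
    refine le_trans ?_ (Nat.cast_le.2 hyX)
    rw [Nat.cast_pow, Nat.cast_pow, ← pow_mul, ← pow_add]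
    exact pow_le_pow_right₀ (by exact_mod_cast hy) (by omega)
  calc (y ^ k : ℕ) ^ 6 * log (X + 1 : ℕ) ^ k
      ≤ (y ^ k : ℕ) ^ 6 * ((8 * k) ^ k * (y : ℝ) ^ k) := by
        have := pow_le_pow_left₀ (log_natCast_nonneg _) hlogy k
        exact mul_le_mul_of_nonneg_left ((log_add_one_pow_le hXy).trans (by gcongr))
          (by positivity)
    _ = (8 * k) ^ k * ((y ^ k : ℕ) ^ 6 * (y : ℝ) ^ k) := by ring
    _ ≤ (8 * k) ^ k * X := by gcongr

/- Sift by the primes up to `z = y ^ k`, where `y` is about `X ^ (1 / (8 * k))`. -/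
theorem card_sifted_le (hk0 : k ≠ 0) (hB : B ≠ 0) (hΩ : ∀ p : ℕ, p.Prime → ¬p ∣ B → #(Ω p) = k)
    (hk : ∀ p : ℕ, p.Prime → ¬p ∣ B → k < p) (hAX : A ⊆ range X)
    (hA : ∀ t ∈ A, ∀ p : ℕ, p.Prime → ¬p ∣ B → p < t → (t : ZMod p) ∉ Ω p) :
    #A ≤ 4 * (8 * k) ^ k * (B / B.totient : ℝ) ^ k * (X / log (X + 1 : ℕ) ^ k) := by
  rcases eq_or_ne X 0 with rfl | hX
  · simp [subset_empty.1 hAX]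
  obtain ⟨y, hy, hyX, hXy⟩ := exists_pow_le_lt_succ_pow (n := 8 * k) (by omega) hX
  have hΩ' : ∀ p : ℕ, p.Prime → ¬p ∣ B → #(Ω p) < p := fun p hp hpB ↦ hΩ p hp hpB ▸ hk p hp hpB
  have hz : 1 ≤ y ^ k := Nat.one_le_pow _ _ hy
  set S := sieveDensity Ω (siftingPrimes B (y ^ k)) (y ^ k)
  have hS : 1 ≤ S := one_le_sieveDensity
    (fun p hp ↦ hΩ' p (mem_siftingPrimes.1 hp).1 (mem_siftingPrimes.1 hp).2.1) hz
  set b := (B / B.totient : ℝ) ^ k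
  have hb : 1 ≤ b := one_le_pow₀ (one_le_div_totient hB)
  have hlog0 : 0 < log (X + 1 : ℕ) := log_pos (by exact_mod_cast (by omega))
  have hmain : X / S * log (X + 1 : ℕ) ^ k ≤ (8 * k) ^ k * b * X := by
    have := (log_add_one_pow_le hXy).trans <|
      mul_le_mul_of_nonneg_left (log_pow_le_sieveDensity hB hΩ hk y) (by positivity)
    calc X / S * log (X + 1 : ℕ) ^ k ≤ X / S * ((8 * k) ^ k * (b * S)) := by gcongr
      _ = (8 * k) ^ k * b * X := by field_simp
  have herror : (y ^ k : ℕ) ^ 6 * log (X + 1 : ℕ) ^ k ≤ (8 * k) ^ k * b * X := by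
    refine (pow_six_mul_log_add_one_pow_le hy hyX hXy).trans ?_
    gcongr
    exact le_mul_of_one_le_right (by positivity) hb
  rw [← mul_div_assoc, le_div_iff₀ (by positivity)]
  have hcard := card_le_div_sieveDensity_siftingPrimes_add hΩ' hAX hA hz
  have := mul_le_mul_of_nonneg_right hcard (pow_pos hlog0 k).le
  linarith

lemma natCast_ne_of_prime_add_mul {p a q t : ℕ} (hp : p.Prime) (hpq : ¬p ∣ q)
    (h : (a + q * t).Prime) (hpt : p < t) : (t : ZMod p) ≠ -a * (q : ZMod p)⁻¹ := by
  have : Fact p.Prime := ⟨hp⟩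
  have hq : (q : ZMod p) ≠ 0 := by rwa [Ne, ZMod.natCast_eq_zero_iff]
  intro ht
  have hdvd : p ∣ a + q * t := by
    rw [← ZMod.natCast_eq_zero_iff]
    push_cast
    rw [ht]
    field_simp
    ring
  have hqt : t ≤ q * t := Nat.le_mul_of_pos_left t (Nat.pos_of_ne_zero fun h0 ↦ hpq (by simp [h0]))
  have := (Nat.prime_dvd_prime_iff_eq hp h).1 hdvd
  omega

lemma card_prime_add_mul_le {q : ℕ} (hq : q ≠ 0) (a X : ℕ) :
    #{t ∈ range X | (a + q * t).Prime} ≤ 32 * (q / q.totient : ℝ) * (X / log (X + 1 : ℕ)) := by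
  have := card_sifted_le (k := 1) (Ω := fun p ↦ {-a * (q : ZMod p)⁻¹}) (X := X) one_ne_zero hq
    (fun p _ _ ↦ card_singleton _) (fun p hp _ ↦ hp.one_lt) (filter_subset _ _)
    fun t ht p hp hpq hpt ↦ notMem_singleton.2 <|
      natCast_ne_of_prime_add_mul hp hpq (mem_filter.1 ht).2 hpt
  norm_num at this ⊢
  exact this

lemma card_prime_pair_le {e₁ e₂ : ℕ} (he₁ : e₁ ≠ 0) (he : e₁ < e₂) :
    ∃ C : ℝ, 0 ≤ C ∧ ∀ X : ℕ, #{t ∈ range X | (1 + e₁ * t).Prime ∧ (1 + e₂ * t).Prime}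
      ≤ C * (X / log (X + 1 : ℕ) ^ 2) := by
  set B := 2 * e₁ * e₂ * (e₂ - e₁)
  refine ⟨4 * (8 * (2 : ℕ)) ^ 2 * (B / B.totient : ℝ) ^ 2, by positivity, fun X ↦ ?_⟩
  have hB : ∀ p, ¬p ∣ B → ¬p ∣ 2 ∧ ¬p ∣ e₁ ∧ ¬p ∣ e₂ ∧ ¬p ∣ e₂ - e₁ := fun p hp ↦
    ⟨fun h ↦ hp (((h.mul_right _).mul_right _).mul_right _),
      fun h ↦ hp (((h.mul_left _).mul_right _).mul_right _),
      fun h ↦ hp ((h.mul_left _).mul_right _), fun h ↦ hp (h.mul_left _)⟩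
  refine card_sifted_le (Ω := fun p ↦ {-(1 : ℕ) * (e₁ : ZMod p)⁻¹, -(1 : ℕ) * (e₂ : ZMod p)⁻¹})
    two_ne_zero ?_ (fun p hp hpB ↦ card_pair ?_) (fun p hp hpB ↦ ?_) (filter_subset _ _)
    fun t ht p hp hpB hpt ↦ ?_
  · have := Nat.sub_ne_zero_of_lt he
    have : e₂ ≠ 0 := by omega
    positivity
  · have : Fact p.Prime := ⟨hp⟩
    simp only [Nat.cast_one, neg_mul, one_mul, ne_eq, neg_inj, inv_inj]
    intro h
    rw [ZMod.natCast_eq_natCast_iff, Nat.modEq_iff_dvd' he.le] at h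
    exact (hB p hpB).2.2.2 h
  · refine lt_of_le_of_ne hp.two_le fun h ↦ (hB p hpB).1 h.symm.dvd
  · obtain ⟨-, h₁, h₂⟩ := mem_filter.1 ht
    rw [mem_insert, mem_singleton, not_or]
    exact ⟨natCast_ne_of_prime_add_mul hp (hB p hpB).2.1 h₁ hpt,
      natCast_ne_of_prime_add_mul hp (hB p hpB).2.2.1 h₂ hpt⟩

end SiftedSets

section BrunTitchmarsh

lemma card_prime_modEq_le_card_prime_add_mul {q : ℕ} (a X : ℕ) :
    #{p ∈ range X | p.Prime ∧ p ≡ a [MOD q]}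
      ≤ #{t ∈ range (X / q + 1) | (a % q + q * t).Prime} := by
  refine card_le_card_of_injOn (· / q) (fun p hp ↦ ?_) fun p hp p' hp' h ↦ ?_
  · obtain ⟨hpX, hp, hpa⟩ := mem_filter.1 hp
    refine mem_filter.2 ⟨mem_range.2 (Nat.lt_succ_of_le (Nat.div_le_div_right ?_)), ?_⟩
    · exact (mem_range.1 hpX).le
    · rwa [← Eq.trans rfl hpa, Nat.mod_add_div]
  · have hmod : p % q = p' % q := (mem_filter.1 hp).2.2.trans (mem_filter.1 hp').2.2.symm
    rw [← Nat.mod_add_div p q, ← Nat.mod_add_div p' q, hmod, show p / q = p' / q from h]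

theorem card_prime_modEq_range_two_pow_le {q j N : ℕ} (hq : q ≠ 0) (hqj : q ≤ 2 ^ j) (hj : j ≤ N)
    (a : ℕ) :
    #{p ∈ range (2 ^ (N + 1)) | p.Prime ∧ p ≡ a [MOD q]}
      ≤ 256 * 2 ^ N / (q.totient * (N + 1 - j : ℝ)) := by
  set X := 2 ^ (N + 1) / q + 1
  have hq0 : (0 : ℝ) < q := by positivity
  have : (0 : ℝ) < q.totient := by exact_mod_cast Nat.totient_pos.2 (Nat.pos_of_ne_zero hq)
  have hj0 : (0 : ℝ) < N + 1 - j := by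
    have : (j : ℝ) ≤ N := by exact_mod_cast hj
    linarith
  have hX : (X : ℝ) ≤ 4 * 2 ^ N / q := by
    have h1 : (1 : ℝ) ≤ 2 ^ (N + 1) / q := (one_le_div hq0).2 <| by
      exact_mod_cast hqj.trans (Nat.pow_le_pow_right two_pos (by omega))
    have h2 : ((2 ^ (N + 1) / q : ℕ) : ℝ) ≤ 2 ^ (N + 1) / q := by exact_mod_cast Nat.cast_div_le
    calc (X : ℝ) ≤ 2 ^ (N + 1) / q + 2 ^ (N + 1) / q := by push_cast [X]; gcongr
      _ = 4 * 2 ^ N / q := by ring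
  have hlog : (N + 1 - j) / 2 ≤ log (X + 1 : ℕ) := by
    have hXj : 2 ^ (N + 1 - j) ≤ X + 1 := by
      refine le_trans ?_ (Nat.le_add_right (2 ^ (N + 1) / q) 2)
      refine (Nat.le_div_iff_mul_le (Nat.pos_of_ne_zero hq)).2 ?_
      calc 2 ^ (N + 1 - j) * q ≤ 2 ^ (N + 1 - j) * 2 ^ j := Nat.mul_le_mul_left _ hqj
        _ = 2 ^ (N + 1) := by rw [← pow_add, Nat.sub_add_cancel (by omega)]
    calc (N + 1 - j : ℝ) / 2 ≤ (N + 1 - j) * log 2 := by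
          nlinarith [log_two_gt_d9]
      _ = log (2 ^ (N + 1 - j) : ℕ) := by
          push_cast
          rw [log_pow, Nat.cast_sub (by omega)]
          push_cast
          ring
      _ ≤ log (X + 1 : ℕ) := log_le_log (by positivity) (by exact_mod_cast hXj)
  calc (#{p ∈ range (2 ^ (N + 1)) | p.Prime ∧ p ≡ a [MOD q]} : ℝ)
      ≤ #{t ∈ range X | (a % q + q * t).Prime} := by
        exact_mod_cast card_prime_modEq_le_card_prime_add_mul a _
    _ ≤ 32 * (q / q.totient) * (X / log (X + 1 : ℕ)) := card_prime_add_mul_le hq _ _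
    _ ≤ 32 * (q / q.totient) * (4 * 2 ^ N / q / ((N + 1 - j) / 2)) := by gcongr
    _ = 256 * 2 ^ N / (q.totient * (N + 1 - j : ℝ)) := by
        field_simp
        ring

lemma card_prime_modEq_and_modEq_le {M D m i N : ℕ} (hM : M ≠ 0) (hD : D ≠ 0) (hMD : M.Coprime D)
    (hMm : M ≤ 2 ^ m) (hDi : D ≤ 2 ^ (i + 1)) (hiN : i < N) (himN : i + 2 * m ≤ N) (a b : ℕ) :
    #{p ∈ range (2 ^ (N + 1)) | p.Prime ∧ p ≡ a [MOD M] ∧ p ≡ b [MOD D]}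
      ≤ 512 * 2 ^ N / (M.totient * D.totient * (N - i : ℝ)) := by
  obtain ⟨c, hca, hcb⟩ := Nat.chineseRemainder hMD a b
  have hMD' : M * D ≤ 2 ^ (m + i + 1) := by
    rw [add_assoc, pow_add]
    exact Nat.mul_le_mul hMm hDi
  have : (0 : ℝ) < M.totient := by exact_mod_cast Nat.totient_pos.2 (Nat.pos_of_ne_zero hM)
  have : (0 : ℝ) < D.totient := by exact_mod_cast Nat.totient_pos.2 (Nat.pos_of_ne_zero hD)
  have hiN' : (0 : ℝ) < N - i := sub_pos.2 (by exact_mod_cast hiN)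
  have himN' : (N - i : ℝ) / 2 ≤ N + 1 - (m + i + 1 : ℕ) := by
    have : (i + 2 * m : ℝ) ≤ N := by exact_mod_cast himN
    push_cast
    linarith
  calc (#{p ∈ range (2 ^ (N + 1)) | p.Prime ∧ p ≡ a [MOD M] ∧ p ≡ b [MOD D]} : ℝ)
      = #{p ∈ range (2 ^ (N + 1)) | p.Prime ∧ p ≡ c [MOD M * D]} := by
        congr! 5 with p
        rw [← Nat.modEq_and_modEq_iff_modEq_mul hMD]
        exact ⟨fun h ↦ ⟨h.1.trans hca.symm, h.2.trans hcb.symm⟩,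
          fun h ↦ ⟨h.1.trans hca, h.2.trans hcb⟩⟩
    _ ≤ 256 * 2 ^ N / ((M * D).totient * (N + 1 - (m + i + 1 : ℕ) : ℝ)) :=
        card_prime_modEq_range_two_pow_le (mul_ne_zero hM hD) hMD' (by omega) c
    _ ≤ 256 * 2 ^ N / (M.totient * D.totient * ((N - i : ℝ) / 2)) := by
        rw [Nat.totient_mul hMD, Nat.cast_mul]
        gcongr
    _ = 512 * 2 ^ N / (M.totient * D.totient * (N - i : ℝ)) := by
        field_simp
        ring

end BrunTitchmarsh

section OddTotient

lemma two_mul_card_add_three_le {s : Finset ℕ} {a : ℕ} (hs : ∀ r ∈ s, Odd r ∧ 3 ≤ r)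
    (hsa : ∀ r ∈ s, r < a) (ha : Odd a) (ha3 : 3 ≤ a) : 2 * #s + 3 ≤ a := by
  have hcard : #s ≤ #(Ico 1 (a / 2)) := by
    refine card_le_card_of_injOn (· / 2) (fun r hr ↦ ?_) fun r hr r' hr' h ↦ ?_
    · have := hs r hr
      have := hsa r hr
      exact mem_Ico.2 (by grind)
    · have := hs r hr
      have := hs r' hr'
      grind
  rw [Nat.card_Ico] at hcard
  grind

lemma prod_div_sub_one_le_sqrt (s : Finset ℕ) (hs : ∀ r ∈ s, Odd r ∧ 3 ≤ r) :
    ∏ r ∈ s, (r / (r - 1) : ℝ) ≤ √(2 * #s + 1) := by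
  induction s using Finset.induction_on_max with
  | empty => simp
  | insert a s hsa ih =>
    rw [forall_mem_insert] at hs
    have ha : 2 * #s + 3 ≤ a := two_mul_card_add_three_le hs.2 hsa hs.1.1 hs.1.2
    have ha' : (2 * #s + 3 : ℝ) ≤ a := by exact_mod_cast ha
    have has : a ∉ s := fun h ↦ (hsa a h).false
    rw [prod_insert has, card_insert_of_notMem has]
    have hfrac : (a / (a - 1) : ℝ) ≤ (2 * #s + 3) / (2 * #s + 2) := by
      rw [div_le_div_iff₀ (by linarith [(#s).cast_nonneg (α := ℝ)]) (by positivity)]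
      linarith
    calc (a / (a - 1) : ℝ) * ∏ r ∈ s, (r / (r - 1) : ℝ)
        ≤ (2 * #s + 3) / (2 * #s + 2) * √(2 * #s + 1) := by
          refine mul_le_mul hfrac (ih hs.2) (prod_nonneg fun r hr ↦ ?_) (by positivity)
          have : (3 : ℝ) ≤ r := by exact_mod_cast (hs.2 r hr).2
          exact div_nonneg (by linarith) (by linarith)
      _ ≤ √(2 * (#s + 1 : ℕ) + 1) := by
          refine le_sqrt_of_sq_le ?_
          rw [mul_pow, sq_sqrt (by positivity), div_pow, div_mul_eq_mul_div,
            div_le_iff₀ (by positivity)]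
          push_cast
          nlinarith [(#s).cast_nonneg (α := ℝ)]

lemma div_totient_le_sqrt_of_odd {D i : ℕ} (hD : Odd D) (hDi : D < 2 ^ (i + 1)) :
    (D / D.totient : ℝ) ≤ √(2 * i + 1) := by
  have hfactors : ∀ p ∈ D.primeFactors, Odd p ∧ 3 ≤ p := fun p hp ↦ by
    have hpodd := hD.of_dvd_nat (Nat.dvd_of_mem_primeFactors hp)
    have := (Nat.prime_of_mem_primeFactors hp).two_le
    exact ⟨hpodd, by grind⟩
  have hcard : #D.primeFactors ≤ i := by
    refine Nat.lt_succ_iff.1 <| (Nat.pow_lt_pow_iff_right (a := 2) one_lt_two).1 ?_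
    calc 2 ^ #D.primeFactors ≤ ∏ p ∈ D.primeFactors, p :=
          pow_card_le_prod _ _ _ fun p hp ↦ (Nat.prime_of_mem_primeFactors hp).two_le
      _ ≤ D := Nat.le_of_dvd hD.pos (Nat.prod_primeFactors_dvd D)
      _ < 2 ^ (i + 1) := hDi
  calc (D / D.totient : ℝ) = ∏ p ∈ D.primeFactors, (p / (p - 1) : ℝ) := by
        rw [← prod_primeFactors_one_add_inv_div_one_sub_inv hD.pos.ne']
        refine prod_congr rfl fun p hp ↦ ?_
        have : (3 : ℝ) ≤ p := by exact_mod_cast (hfactors p hp).2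
        have : (p : ℝ) - 1 ≠ 0 := by linarith
        have : (p : ℝ) ≠ 0 := by linarith
        field_simp
        ring
    _ ≤ √(2 * #D.primeFactors + 1) := prod_div_sub_one_le_sqrt _ hfactors
    _ ≤ √(2 * i + 1) := by gcongr

end OddTotient

section TwinMultipliers

/-- `D` is a twin multiplier for `n` if two distinct divisors of `n`, multiplied by `D`, are
shifted primes. -/
def IsTwinMultiplier (n D : ℕ) : Prop :=
  ∃ e₁ e₂, e₁ < e₂ ∧ e₁ ∣ n ∧ e₂ ∣ n ∧ (1 + e₁ * D).Prime ∧ (1 + e₂ * D).Prime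

open Classical in
lemma card_isTwinMultiplier_le {n : ℕ} (hn : n ≠ 0) :
    ∃ C : ℝ, 0 ≤ C ∧ ∀ X : ℕ,
      #{D ∈ range X | IsTwinMultiplier n D} ≤ C * (X / log (X + 1 : ℕ) ^ 2) := by
  set E := {e ∈ n.divisors ×ˢ n.divisors | e.1 < e.2}
  have hE : ∀ e ∈ E, e.1 ≠ 0 ∧ e.1 < e.2 := fun e he ↦ by
    obtain ⟨hen, he⟩ := mem_filter.1 he
    exact ⟨(Nat.pos_of_mem_divisors (mem_product.1 hen).1).ne', he⟩
  choose! C hC0 hC using fun e he ↦ card_prime_pair_le (hE e he).1 (hE e he).2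
  refine ⟨∑ e ∈ E, C e, sum_nonneg hC0, fun X ↦ ?_⟩
  have hcover : {D ∈ range X | IsTwinMultiplier n D}
      ⊆ E.biUnion fun e ↦ {t ∈ range X | (1 + e.1 * t).Prime ∧ (1 + e.2 * t).Prime} := by
    intro D hD
    obtain ⟨hDX, e₁, e₂, he, he₁, he₂, h⟩ := mem_filter.1 hD
    refine mem_biUnion.2 ⟨(e₁, e₂), mem_filter.2 ⟨mem_product.2 ⟨?_, ?_⟩, he⟩,
      mem_filter.2 ⟨hDX, h⟩⟩
    exacts [Nat.mem_divisors.2 ⟨he₁, hn⟩, Nat.mem_divisors.2 ⟨he₂, hn⟩]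
  calc (#{D ∈ range X | IsTwinMultiplier n D} : ℝ)
      ≤ ∑ e ∈ E, (#{t ∈ range X | (1 + e.1 * t).Prime ∧ (1 + e.2 * t).Prime} : ℝ) := by
        exact_mod_cast (card_le_card hcover).trans card_biUnion_le
    _ ≤ ∑ e ∈ E, C e * (X / log (X + 1 : ℕ) ^ 2) := sum_le_sum fun e he ↦ hC e he X
    _ = (∑ e ∈ E, C e) * (X / log (X + 1 : ℕ) ^ 2) := (sum_mul ..).symm

open Classical in
/-- The odd twin multipliers for `n` in the dyadic interval `[2 ^ i, 2 ^ (i + 1))`. -/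
noncomputable def oddTwinMultipliers (n i : ℕ) : Finset ℕ :=
  {D ∈ Ico (2 ^ i) (2 ^ (i + 1)) | Odd D ∧ IsTwinMultiplier n D}

lemma mem_oddTwinMultipliers {n i D : ℕ} : D ∈ oddTwinMultipliers n i ↔
    (2 ^ i ≤ D ∧ D < 2 ^ (i + 1)) ∧ Odd D ∧ IsTwinMultiplier n D := by
  simp [oddTwinMultipliers]

lemma card_oddTwinMultipliers_le {n : ℕ} (hn : n ≠ 0) :
    ∃ C : ℝ, 0 ≤ C ∧ ∀ i, #(oddTwinMultipliers n i) ≤ C * (2 ^ i / (i + 1 : ℝ) ^ 2) := by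
  classical
  obtain ⟨C, hC0, hC⟩ := card_isTwinMultiplier_le hn
  refine ⟨8 * C, by positivity, fun i ↦ ?_⟩
  have hsub : oddTwinMultipliers n i ⊆ {D ∈ range (2 ^ (i + 1)) | IsTwinMultiplier n D} := by
    intro D hD
    obtain ⟨⟨-, hDi⟩, -, hD⟩ := mem_oddTwinMultipliers.1 hD
    exact mem_filter.2 ⟨mem_range.2 hDi, hD⟩
  have hlog : (i + 1 : ℝ) / 2 ≤ log (2 ^ (i + 1) + 1 : ℕ) :=
    calc (i + 1 : ℝ) / 2 ≤ (i + 1) * log 2 := by nlinarith [log_two_gt_d9]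
      _ = log (2 ^ (i + 1) : ℕ) := by simp
      _ ≤ log (2 ^ (i + 1) + 1 : ℕ) := log_le_log (by positivity) (by simp)
  calc (#(oddTwinMultipliers n i) : ℝ)
      ≤ C * ((2 ^ (i + 1) : ℕ) / log (2 ^ (i + 1) + 1 : ℕ) ^ 2) :=
        (Nat.cast_le.2 (card_le_card hsub)).trans (hC _)
    _ ≤ C * ((2 ^ (i + 1) : ℕ) / ((i + 1) / 2) ^ 2) := by gcongr
    _ = 8 * C * (2 ^ i / (i + 1 : ℝ) ^ 2) := by
        push_cast
        field_simp
        ring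

/-- The weight `(i + 1) ^ (-3 / 2)`, the order of magnitude of the sum of `1 / φ D` over the odd
twin multipliers `D` in `[2 ^ i, 2 ^ (i + 1))`. -/
noncomputable def twinWeight (i : ℕ) : ℝ := √(i + 1) / (i + 1 : ℝ) ^ 2

/- The loss `D / φ D ≪ √i` is affordable because the square of the logarithm is saved. -/
lemma sum_oddTwinMultipliers_inv_totient_le {n : ℕ} (hn : n ≠ 0) :
    ∃ C : ℝ, 0 ≤ C ∧ ∀ i,
      ∑ D ∈ oddTwinMultipliers n i, (1 / D.totient : ℝ) ≤ C * twinWeight i := by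
  obtain ⟨C, hC0, hC⟩ := card_oddTwinMultipliers_le hn
  refine ⟨C * √2, by positivity, fun i ↦ ?_⟩
  have hterm : ∀ D ∈ oddTwinMultipliers n i, (1 / D.totient : ℝ) ≤ √2 * √(i + 1) / 2 ^ i := by
    intro D hD
    obtain ⟨⟨hiD, hDi⟩, hDodd, -⟩ := mem_oddTwinMultipliers.1 hD
    have hD0 : (0 : ℝ) < D := by exact_mod_cast hDodd.pos
    calc (1 / D.totient : ℝ) = D / D.totient / D := by field_simp
      _ ≤ √(2 * i + 1) / D := by gcongr; exact div_totient_le_sqrt_of_odd hDodd hDi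
      _ ≤ √(2 * (i + 1)) / 2 ^ i := by
          gcongr
          · linarith
          · exact_mod_cast hiD
      _ = √2 * √(i + 1) / 2 ^ i := by rw [sqrt_mul zero_le_two]
  calc ∑ D ∈ oddTwinMultipliers n i, (1 / D.totient : ℝ)
      ≤ #(oddTwinMultipliers n i) * (√2 * √(i + 1) / 2 ^ i) := by
        simpa using sum_le_card_nsmul _ _ _ hterm
    _ ≤ C * (2 ^ i / (i + 1 : ℝ) ^ 2) * (√2 * √(i + 1) / 2 ^ i) := by gcongr; exact hC i
    _ = C * √2 * twinWeight i := by
        rw [twinWeight]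
        field_simp

end TwinMultipliers

section DirichletDyadic

lemma one_div_one_sub_two_rpow_neg_le {u : ℝ} (hu0 : 0 < u) (hu1 : u ≤ 1) :
    1 / (1 - 2 ^ (-u)) ≤ 2 / u := by
  have h : (2 : ℝ) ^ (-u) ≤ 1 + u * (-1 / 2) := by
    have := rpow_one_add_le_one_add_mul_self (s := -1 / 2) (by norm_num) hu0.le hu1
    rwa [show (1 + -1 / 2 : ℝ) = 2⁻¹ by norm_num, inv_rpow zero_le_two, ← rpow_neg zero_le_two]
      at this
  rw [div_le_div_iff₀ (by linarith) hu0]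
  linarith

variable {f : ℕ → ℝ} {c : ℝ} {N₀ : ℕ}

lemma div_rpow_le_div (hf : ∀ n, 0 ≤ f n) {x : ℝ} (hx : 1 < x) (n : ℕ) :
    f n / (n : ℝ) ^ x ≤ f n / n := by
  rcases n.eq_zero_or_pos with rfl | hn
  · simp [zero_rpow (by linarith : x ≠ 0)]
  · have : (n : ℝ) ≤ n ^ x := self_le_rpow_of_one_le (by exact_mod_cast hn) hx.le
    have := hf n
    gcongr

lemma sum_dyadic_div_rpow_le (hf : ∀ n, 0 ≤ f n) {N : ℕ}
    (h : ∑ n ∈ Ico (2 ^ N) (2 ^ (N + 1)), f n ≤ c * 2 ^ N) {x : ℝ} (hx : 0 ≤ x) :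
    ∑ n ∈ Ico (2 ^ N) (2 ^ (N + 1)), f n / (n : ℝ) ^ x ≤ c * ((2 : ℝ) ^ (1 - x)) ^ N := by
  calc ∑ n ∈ Ico (2 ^ N) (2 ^ (N + 1)), f n / (n : ℝ) ^ x
      ≤ ∑ n ∈ Ico (2 ^ N) (2 ^ (N + 1)), f n / ((2 : ℝ) ^ x) ^ N := by
        refine sum_le_sum fun n hn ↦ div_le_div_of_nonneg_left (hf n) (by positivity) ?_
        rw [rpow_pow_comm zero_le_two]
        exact rpow_le_rpow (by positivity) (by exact_mod_cast (mem_Ico.1 hn).1) hx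
    _ = (∑ n ∈ Ico (2 ^ N) (2 ^ (N + 1)), f n) / ((2 : ℝ) ^ x) ^ N := (sum_div ..).symm
    _ ≤ c * 2 ^ N / ((2 : ℝ) ^ x) ^ N := by gcongr
    _ = c * ((2 : ℝ) ^ (1 - x)) ^ N := by
        rw [rpow_sub two_pos, rpow_one, div_pow, mul_div_assoc]

lemma sum_range_two_pow_div_rpow_le (hf : ∀ n, 0 ≤ f n)
    (h : ∀ N ≥ N₀, ∑ n ∈ Ico (2 ^ N) (2 ^ (N + 1)), f n ≤ c * 2 ^ N) {x : ℝ} (hx : 1 < x) (k : ℕ) :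
    ∑ n ∈ range (2 ^ (N₀ + k)), f n / (n : ℝ) ^ x
      ≤ ∑ n ∈ range (2 ^ N₀), f n / n + c * ∑ j ∈ range k, ((2 : ℝ) ^ (1 - x)) ^ (N₀ + j) := by
  induction k with
  | zero => simpa using sum_le_sum fun n _ ↦ div_rpow_le_div hf hx n
  | succ k ih =>
    rw [sum_range_succ, mul_add, ← add_assoc (∑ n ∈ _, _), ← sum_range_add_sum_Ico _
      (Nat.pow_le_pow_right two_pos (by omega : N₀ + k ≤ N₀ + (k + 1)))]
    exact add_le_add ih (sum_dyadic_div_rpow_le hf (h _ (Nat.le_add_right ..)) (by linarith))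

lemma tsum_div_rpow_le (hf : ∀ n, 0 ≤ f n)
    (h : ∀ N ≥ N₀, ∑ n ∈ Ico (2 ^ N) (2 ^ (N + 1)), f n ≤ c * 2 ^ N) {x : ℝ}
    (hx : x ∈ Set.Ioc 1 2) :
    ∑' n : ℕ, f n / (n : ℝ) ^ x ≤ ∑ n ∈ range (2 ^ N₀), f n / n + c * (2 / (x - 1)) := by
  have hc : 0 ≤ c := nonneg_of_mul_nonneg_left
    ((sum_nonneg fun n _ ↦ hf n).trans (h N₀ le_rfl)) (by positivity)
  set r : ℝ := 2 ^ (1 - x)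
  have hr0 : 0 ≤ r := by positivity
  have hr1 : r < 1 := rpow_lt_one_of_one_lt_of_neg one_lt_two (by linarith [hx.1])
  have hr : 1 / (1 - r) ≤ 2 / (x - 1) := by
    have := one_div_one_sub_two_rpow_neg_le (u := x - 1) (by linarith [hx.1]) (by linarith [hx.2])
    rwa [neg_sub] at this
  have hterm : ∀ n : ℕ, 0 ≤ f n / (n : ℝ) ^ x := fun n ↦ div_nonneg (hf n) (by positivity)
  refine Real.tsum_le_of_sum_range_le hterm fun k ↦ ?_
  calc ∑ n ∈ range k, f n / (n : ℝ) ^ x ≤ ∑ n ∈ range (2 ^ (N₀ + k)), f n / (n : ℝ) ^ x := by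
        refine sum_le_sum_of_subset_of_nonneg (range_mono ?_) fun n _ _ ↦ hterm n
        exact (Nat.le_add_left k N₀).trans Nat.lt_two_pow_self.le
    _ ≤ ∑ n ∈ range (2 ^ N₀), f n / n + c * ∑ j ∈ range k, r ^ (N₀ + j) :=
        sum_range_two_pow_div_rpow_le hf h hx.1 k
    _ ≤ ∑ n ∈ range (2 ^ N₀), f n / n + c * (2 / (x - 1)) := by
        gcongr
        calc ∑ j ∈ range k, r ^ (N₀ + j) ≤ ∑ j ∈ range k, r ^ j :=
              sum_le_sum fun j _ ↦ pow_le_pow_of_le_one hr0 hr1.le (Nat.le_add_left j N₀)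
          _ ≤ ∑' j, r ^ j :=
              (summable_geometric_of_lt_one hr0 hr1).sum_le_tsum _ fun _ _ ↦ by positivity
          _ = 1 / (1 - r) := by rw [tsum_geometric_of_lt_one hr0 hr1, one_div]
          _ ≤ 2 / (x - 1) := hr

lemma le_two_mul_of_sum_dyadic_le (hf : ∀ n, 0 ≤ f n)
    (h : ∀ N ≥ N₀, ∑ n ∈ Ico (2 ^ N) (2 ^ (N + 1)), f n ≤ c * 2 ^ N) {A C : ℝ}
    (hA : ∀ x ∈ Set.Ioc (1 : ℝ) 2, A / (x - 1) - C ≤ ∑' n : ℕ, f n / (n : ℝ) ^ x) :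
    A ≤ 2 * c := by
  set T := ∑ n ∈ range (2 ^ N₀), f n / n + C
  have hbound : ∀ k : ℕ, A - 2 * c ≤ T * (1 / (k + 1)) := fun k ↦ by
    have hk : (0 : ℝ) < k + 1 := by positivity
    have hx : (1 + 1 / (k + 1) : ℝ) ∈ Set.Ioc 1 2 := by
      have : (1 / (k + 1) : ℝ) ≤ 1 := (div_le_one hk).2 (by simp)
      exact ⟨by simpa using hk, by linarith⟩
    have := (hA _ hx).trans (tsum_div_rpow_le hf h hx)
    rw [add_sub_cancel_left, div_div_eq_mul_div, div_div_eq_mul_div] at this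
    rw [← div_eq_mul_one_div, le_div_iff₀ hk]
    simp only [T]
    linarith
  have := ge_of_tendsto' (tendsto_one_div_add_atTop_nhds_zero_nat.const_mul T) hbound
  linarith

open ArithmeticFunction (vonMangoldt_le_log)
open ArithmeticFunction.vonMangoldt

lemma exists_le_tsum_prime_residueClass {M : ℕ} [NeZero M] {a : ZMod M} (ha : IsUnit a) :
    ∃ C : ℝ, ∀ x ∈ Set.Ioc (1 : ℝ) 2, (M.totient : ℝ)⁻¹ / (x - 1) - C
      ≤ ∑' n : ℕ, (if n.Prime then residueClass a n else 0) / (n : ℝ) ^ x := by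
  obtain ⟨C, hC⟩ := LSeries_residueClass_lower_bound ha
  set g : ℕ → ℝ := fun n ↦ if n.Prime then 0 else residueClass a n
  have hg : Summable fun n : ℕ ↦ g n / n := summable_residueClass_non_primes_div a
  have hg0 : ∀ n, 0 ≤ g n := fun n ↦ by
    simp only [g]
    split_ifs
    exacts [le_rfl, residueClass_nonneg a n]
  refine ⟨C + ∑' n : ℕ, g n / n, fun x hx ↦ ?_⟩
  have hle := div_rpow_le_div hg0 hx.1
  have hall : Summable fun n : ℕ ↦ residueClass a n / (n : ℝ) ^ x :=
    LSeries.summable_real_of_abscissaOfAbsConv_lt <|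
      (abscissaOfAbsConv_residueClass_le_one a).trans_lt <| mod_cast hx.1
  have hgx : Summable fun n : ℕ ↦ g n / (n : ℝ) ^ x :=
    hg.of_nonneg_of_le (fun n ↦ div_nonneg (hg0 n) (by positivity)) hle
  have hsplit : ∑' n : ℕ, residueClass a n / (n : ℝ) ^ x - ∑' n : ℕ, g n / (n : ℝ) ^ x
      = ∑' n : ℕ, (if n.Prime then residueClass a n else 0) / (n : ℝ) ^ x := by
    rw [← hall.tsum_sub hgx]
    refine tsum_congr fun n ↦ ?_
    by_cases hn : n.Prime <;> simp [g, hn]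
  have := hC hx
  have := hgx.tsum_le_tsum hle hg
  linarith

lemma sum_dyadic_prime_residueClass_le (M a N : ℕ) :
    ∑ n ∈ Ico (2 ^ N) (2 ^ (N + 1)), (if n.Prime then residueClass (a : ZMod M) n else 0)
      ≤ (N + 1) * log 2 * #{p ∈ Ico (2 ^ N) (2 ^ (N + 1)) | p.Prime ∧ p ≡ a [MOD M]} := by
  rw [mul_comm, ← nsmul_eq_mul, ← sum_const, sum_filter]
  refine sum_le_sum fun n hn ↦ ?_
  by_cases hp : n.Prime
  · by_cases hna : n ≡ a [MOD M]
    · simp only [hp, hna, and_self, if_true]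
      calc residueClass (a : ZMod M) n ≤ log n := (residueClass_le _ n).trans vonMangoldt_le_log
        _ ≤ log (2 ^ (N + 1) : ℕ) :=
            log_le_log (by exact_mod_cast hp.pos) (by exact_mod_cast (mem_Ico.1 hn).2.le)
        _ = (N + 1) * log 2 := by simp
    · simp [hp, hna, residueClass, ZMod.natCast_eq_natCast_iff]
  · simp [hp]

theorem frequently_lt_mul_card_prime_dyadic {M a : ℕ} (hM : M ≠ 0) (ha : a.Coprime M) :
    ∃ᶠ N : ℕ in atTop, (1 / 4 : ℝ) * (2 ^ N / M.totient)
      < N * #{p ∈ Ico (2 ^ N) (2 ^ (N + 1)) | p.Prime ∧ p ≡ a [MOD M]} := by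
  intro h
  have : NeZero M := ⟨hM⟩
  have hφ : (0 : ℝ) < M.totient := by exact_mod_cast Nat.totient_pos.2 (Nat.pos_of_ne_zero hM)
  obtain ⟨N₀, hN₀⟩ := eventually_atTop.1 h
  obtain ⟨C, hC⟩ := exists_le_tsum_prime_residueClass ((ZMod.isUnit_iff_coprime a M).2 ha)
  have hle := le_two_mul_of_sum_dyadic_le (N₀ := max N₀ 1) (c := log 2 / (2 * M.totient))
    (fun n ↦ ?_) (fun N hN ↦ ?_) hC
  · rw [← mul_div_assoc, mul_div_mul_left _ _ two_ne_zero, inv_eq_one_div,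
      div_le_div_iff_of_pos_right hφ] at hle
    linarith [log_two_lt_d9]
  · split_ifs
    exacts [residueClass_nonneg _ n, le_rfl]
  · have hcard := not_lt.1 (hN₀ N (le_of_max_le_left hN))
    have hN1 : (1 : ℝ) ≤ N := by exact_mod_cast le_of_max_le_right hN
    set P := {p ∈ Ico (2 ^ N) (2 ^ (N + 1)) | p.Prime ∧ p ≡ a [MOD M]}
    calc _ ≤ (N + 1) * log 2 * #P := sum_dyadic_prime_residueClass_le M a N
      _ ≤ (2 * N) * log 2 * #P := by gcongr; linarith
      _ = 2 * log 2 * (N * #P) := by ring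
      _ ≤ 2 * log 2 * (1 / 4 * (2 ^ N / M.totient)) := by gcongr
      _ = log 2 / (2 * M.totient) * 2 ^ N := by
          field_simp
          norm_num

end DirichletDyadic

section Convolution

lemma twinWeight_nonneg (i : ℕ) : 0 ≤ twinWeight i := by
  unfold twinWeight
  positivity

lemma summable_twinWeight : Summable twinWeight := by
  refine ((summable_nat_add_iff 1).2 (summable_nat_rpow (p := -3 / 2).2 (by norm_num))).congr
    fun i ↦ ?_
  have : (0 : ℝ) < i + 1 := by positivity
  rw [twinWeight, sqrt_eq_rpow, ← rpow_natCast, ← rpow_sub this]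
  norm_num

lemma mul_twinWeight_div_sub_le {i N : ℕ} (h : i < N) :
    N * (twinWeight i / (N - i)) ≤ 2 * twinWeight i + 3 / √N * (1 / (N - i)) := by
  have hNi : (0 : ℝ) < N - i := sub_pos.2 (by exact_mod_cast h)
  have hN : (0 : ℝ) < N := by exact_mod_cast h.pos
  have hw := twinWeight_nonneg i
  rcases le_or_gt (2 * i : ℝ) N with hi | hi
  · have : N * (twinWeight i / (N - i)) ≤ 2 * twinWeight i := by
      rw [← mul_div_assoc, div_le_iff₀ hNi]
      nlinarith
    have : 0 ≤ 3 / √N * (1 / (N - i)) := by positivity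
    linarith
  · have : N * twinWeight i ≤ 3 / √N :=
      calc N * twinWeight i ≤ 2 * (i + 1) * twinWeight i := by gcongr; linarith
        _ = 2 / √(i + 1) := by
          rw [twinWeight]
          have := sq_sqrt (by positivity : (0 : ℝ) ≤ i + 1)
          field_simp
          linarith
        _ ≤ 3 / √N := by
          rw [div_le_div_iff₀ (by positivity) (by positivity)]
          have : √N ≤ 3 / 2 * √(i + 1) := sqrt_le_iff.2 ⟨by positivity, by
            rw [mul_pow, sq_sqrt (by positivity)]
            linarith⟩
          linarith
    calc N * (twinWeight i / (N - i)) = N * twinWeight i * (1 / (N - i)) := by ring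
      _ ≤ 3 / √N * (1 / (N - i)) := by gcongr
      _ ≤ 2 * twinWeight i + 3 / √N * (1 / (N - i)) := by linarith

lemma sum_range_one_div_sub_le (N : ℕ) : ∑ i ∈ range N, (1 / (N - i) : ℝ) ≤ 1 + log N := by
  refine le_trans (Eq.le ?_) (harmonic_le_one_add_log N)
  rw [harmonic, ← sum_range_reflect]
  push_cast
  refine sum_congr rfl fun i hi ↦ ?_
  rw [Nat.sub_sub, Nat.cast_sub (by have := mem_range.1 hi; omega)]
  push_cast
  ring

/-- A bound for `N * ∑ i ∈ Ico k N, twinWeight i / (N - i)` which is small for large `k` and `N`: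
the tail of the series of weights bounds the contribution of small `i`, and the second term that
of the `i` close to `N`. -/
noncomputable def convolutionBound (k N : ℕ) : ℝ :=
  2 * ∑' i, twinWeight (i + k) + 3 / √N * (1 + log N)

lemma mul_sum_twinWeight_div_sub_le (k N : ℕ) :
    N * ∑ i ∈ Ico k N, twinWeight i / (N - i) ≤ convolutionBound k N := by
  have htail : ∑ i ∈ Ico k N, twinWeight i ≤ ∑' i, twinWeight (i + k) := by
    rw [sum_Ico_eq_sum_range]
    simp only [add_comm k]
    exact ((summable_nat_add_iff k).2 summable_twinWeight).sum_le_tsum _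
      fun i _ ↦ twinWeight_nonneg _
  have hharm : ∑ i ∈ Ico k N, (1 / (N - i) : ℝ) ≤ 1 + log N := by
    refine (sum_le_sum_of_subset_of_nonneg (fun i hi ↦ mem_range.2 (mem_Ico.1 hi).2)
      fun i hi _ ↦ ?_).trans (sum_range_one_div_sub_le N)
    have : (i : ℝ) ≤ N := by exact_mod_cast (mem_range.1 hi).le
    exact one_div_nonneg.2 (sub_nonneg.2 this)
  calc N * ∑ i ∈ Ico k N, twinWeight i / (N - i)
      ≤ ∑ i ∈ Ico k N, (2 * twinWeight i + 3 / √N * (1 / (N - i))) := by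
        rw [mul_sum]
        exact sum_le_sum fun i hi ↦ mul_twinWeight_div_sub_le (mem_Ico.1 hi).2
    _ = 2 * ∑ i ∈ Ico k N, twinWeight i + 3 / √N * ∑ i ∈ Ico k N, (1 / (N - i) : ℝ) := by
        rw [sum_add_distrib, mul_sum, mul_sum]
    _ ≤ convolutionBound k N := by
        unfold convolutionBound
        gcongr

open Topology

lemma tendsto_three_div_sqrt_mul_one_add_log :
    Tendsto (fun N : ℕ ↦ 3 / √N * (1 + log N)) atTop (𝓝 0) := by
  have hconst : Tendsto (fun x : ℝ ↦ 1 / √x) atTop (𝓝 0) :=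
    tendsto_const_nhds.div_atTop tendsto_sqrt_atTop
  have hlog : Tendsto (fun x : ℝ ↦ log x / √x) atTop (𝓝 0) := by
    simpa only [sqrt_eq_rpow] using
      (isLittleO_log_rpow_atTop (one_half_pos (α := ℝ))).tendsto_div_nhds_zero
  refine ((((hconst.add hlog).const_mul 3).comp tendsto_natCast_atTop_atTop).congr
    fun N ↦ ?_).trans_eq (by simp)
  simp only [comp_apply]
  ring

lemma tendsto_convolutionBound {k : ℕ → ℕ} (hk : Tendsto k atTop atTop) :
    Tendsto (fun N ↦ convolutionBound (k N) N) atTop (𝓝 0) := by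
  simpa [convolutionBound, comp_def] using (((tendsto_sum_nat_add twinWeight).comp hk).const_mul
    2).add tendsto_three_div_sqrt_mul_one_add_log

lemma eventually_eventually_convolutionBound_lt {ε : ℝ} (hε : 0 < ε) :
    ∀ᶠ k in atTop, ∀ᶠ N in atTop, convolutionBound k N < ε := by
  filter_upwards [(tendsto_sum_nat_add twinWeight).eventually_lt_const
    (by positivity : 0 < ε / 4)] with k hk
  filter_upwards [tendsto_three_div_sqrt_mul_one_add_log.eventually_lt_const
    (by positivity : 0 < ε / 2)] with N hN
  rw [convolutionBound]
  linarith

end Convolution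

section ExceptionalPrimes

/-- The primes `p ≡ a [MOD M]` up to `2 ^ (N + 1)` for which `p - 1` has an odd twin multiplier of
`n` in `[2 ^ i, 2 ^ (i + 1))`, coprime to `M`, as a divisor. -/
noncomputable def exceptionalPrimes (n M a i N : ℕ) : Finset ℕ := by
  classical
  exact {p ∈ range (2 ^ (N + 1)) | p.Prime ∧ p ≡ a [MOD M] ∧
    ∃ D ∈ oddTwinMultipliers n i, M.Coprime D ∧ p ≡ 1 [MOD D]}

lemma mem_exceptionalPrimes {n M a i N p : ℕ} :
    p ∈ exceptionalPrimes n M a i N ↔ p < 2 ^ (N + 1) ∧ p.Prime ∧ p ≡ a [MOD M] ∧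
      ∃ D ∈ oddTwinMultipliers n i, M.Coprime D ∧ p ≡ 1 [MOD D] := by
  simp [exceptionalPrimes]

lemma card_exceptionalPrimes_le {n M m i N : ℕ} (hM : M ≠ 0) (hMm : M ≤ 2 ^ m) (hiN : i < N)
    (himN : i + 2 * m ≤ N) (a : ℕ) :
    (#(exceptionalPrimes n M a i N) : ℝ) ≤
      512 * 2 ^ N / (M.totient * (N - i)) *
        ∑ D ∈ oddTwinMultipliers n i, (1 / D.totient : ℝ) := by
  set T := {D ∈ oddTwinMultipliers n i | M.Coprime D}
  have hsub : exceptionalPrimes n M a i N ⊆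
      T.biUnion fun D ↦ {p ∈ range (2 ^ (N + 1)) | p.Prime ∧ p ≡ a [MOD M] ∧ p ≡ 1 [MOD D]} := by
    intro p hp
    obtain ⟨hlt, hprime, hpa, D, hD, hMD, hpD⟩ := mem_exceptionalPrimes.1 hp
    exact mem_biUnion.2 ⟨D, mem_filter.2 ⟨hD, hMD⟩,
      mem_filter.2 ⟨mem_range.2 hlt, hprime, hpa, hpD⟩⟩
  calc (#(exceptionalPrimes n M a i N) : ℝ)
      ≤ ∑ D ∈ T, (#{p ∈ range (2 ^ (N + 1)) | p.Prime ∧ p ≡ a [MOD M] ∧ p ≡ 1 [MOD D]} : ℝ) := by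
        exact_mod_cast (card_le_card hsub).trans card_biUnion_le
    _ ≤ ∑ D ∈ T, 512 * 2 ^ N / (M.totient * (N - i)) * (1 / D.totient : ℝ) := by
        refine sum_le_sum fun D hD ↦ ?_
        obtain ⟨hD, hMD⟩ := mem_filter.1 hD
        obtain ⟨⟨-, hDi⟩, hodd, -⟩ := mem_oddTwinMultipliers.1 hD
        refine (card_prime_modEq_and_modEq_le hM hodd.pos.ne' hMD hMm hDi.le hiN himN a
          1).trans_eq ?_
        rw [div_mul_div_comm, mul_one, mul_right_comm]
    _ ≤ 512 * 2 ^ N / (M.totient * (N - i)) *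
          ∑ D ∈ oddTwinMultipliers n i, (1 / D.totient : ℝ) := by
        have : (0 : ℝ) ≤ N - i := sub_nonneg.2 (by exact_mod_cast hiN.le)
        rw [← mul_sum]
        gcongr
        exact filter_subset _ _

lemma exceptionalPrimes_subset_one (n M a i N : ℕ) :
    exceptionalPrimes n M a i N ⊆ exceptionalPrimes n 1 a i N := by
  intro p hp
  obtain ⟨hlt, hprime, -, D, hD, -, hpD⟩ := mem_exceptionalPrimes.1 hp
  exact mem_exceptionalPrimes.2 ⟨hlt, hprime, Nat.modEq_one, D, hD, Nat.coprime_one_left D, hpD⟩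

lemma card_exceptionalPrimes_le_twinWeight {n : ℕ} (hn : n ≠ 0) :
    ∃ C : ℝ, 0 < C ∧ ∀ {M m i N : ℕ}, M ≠ 0 → M ≤ 2 ^ m → i < N → i + 2 * m ≤ N → ∀ a : ℕ,
      (#(exceptionalPrimes n M a i N) : ℝ) ≤
        C * 2 ^ N / M.totient * (twinWeight i / (N - i)) := by
  obtain ⟨C, hC0, hC⟩ := sum_oddTwinMultipliers_inv_totient_le hn
  refine ⟨512 * (C + 1), by positivity, fun {M m i N} hM hMm hiN h a ↦ ?_⟩
  have : (0 : ℝ) ≤ N - i := sub_nonneg.2 (by exact_mod_cast hiN.le)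
  have := twinWeight_nonneg i
  calc (#(exceptionalPrimes n M a i N) : ℝ)
      ≤ 512 * 2 ^ N / (M.totient * (N - i)) * (C * twinWeight i) :=
        (card_exceptionalPrimes_le hM hMm hiN h a).trans (by gcongr; exact hC i)
    _ ≤ 512 * 2 ^ N / (M.totient * (N - i)) * ((C + 1) * twinWeight i) := by
        gcongr
        linarith
    _ = 512 * (C + 1) * 2 ^ N / M.totient * (twinWeight i / (N - i)) := by
        rw [div_mul_div_comm, div_mul_eq_mul_div]
        ring

/- For `i` close to `N` the congruence modulo `M` is of no use, hence dropped. -/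
lemma mul_sum_card_exceptionalPrimes_le {n : ℕ} (hn : n ≠ 0) :
    ∃ C : ℝ, 0 < C ∧ ∀ {M m : ℕ}, M ≠ 0 → M ≤ 2 ^ m → ∀ a k N : ℕ,
      N * ∑ i ∈ Ico k N, (#(exceptionalPrimes n M a i N) : ℝ) ≤
        C * 2 ^ N * (convolutionBound k N / M.totient + convolutionBound (N - 2 * m) N) := by
  obtain ⟨C, hC0, hC⟩ := card_exceptionalPrimes_le_twinWeight hn
  refine ⟨C, hC0, fun {M m} hM hMm a k N ↦ ?_⟩
  have hlarge {i : ℕ} (hi : i < N) :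
      (#(exceptionalPrimes n M a i N) : ℝ) ≤ C * 2 ^ N * (twinWeight i / (N - i)) := by
    refine (Nat.cast_le.2 (card_le_card (exceptionalPrimes_subset_one n M a i N))).trans ?_
    simpa using hC (m := 0) one_ne_zero le_rfl hi hi.le a
  have hterm {i : ℕ} (hi : i < N) : 0 ≤ twinWeight i / (N - i : ℝ) :=
    div_nonneg (twinWeight_nonneg i) (sub_nonneg.2 (by exact_mod_cast hi.le))
  calc N * ∑ i ∈ Ico k N, (#(exceptionalPrimes n M a i N) : ℝ)
      ≤ N * (∑ i ∈ Ico k N, C * 2 ^ N / M.totient * (twinWeight i / (N - i)) +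
          ∑ i ∈ Ico (N - 2 * m) N, C * 2 ^ N * (twinWeight i / (N - i))) := by
        gcongr
        rw [← sum_filter_add_sum_filter_not (Ico k N) (· + 2 * m ≤ N)]
        gcongr ?_ + ?_
        · refine (sum_le_sum fun i hi ↦ ?_).trans (sum_le_sum_of_subset_of_nonneg
            (filter_subset _ _) fun i hi _ ↦ mul_nonneg (by positivity) (hterm (mem_Ico.1 hi).2))
          obtain ⟨hi, him⟩ := mem_filter.1 hi
          exact hC hM hMm (mem_Ico.1 hi).2 him a
        · refine (sum_le_sum fun i hi ↦ hlarge (mem_Ico.1 (mem_filter.1 hi).1).2).trans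
            (sum_le_sum_of_subset_of_nonneg (fun i hi ↦ ?_) fun i hi _ ↦
              mul_nonneg (by positivity) (hterm (mem_Ico.1 hi).2))
          simp only [mem_filter, mem_Ico] at hi ⊢
          omega
    _ = C * 2 ^ N * (N * (∑ i ∈ Ico k N, twinWeight i / (N - i)) / M.totient +
          N * ∑ i ∈ Ico (N - 2 * m) N, twinWeight i / (N - i)) := by
        rw [← mul_sum, ← mul_sum]
        ring
    _ ≤ C * 2 ^ N * (convolutionBound k N / M.totient + convolutionBound (N - 2 * m) N) := by
        gcongr <;> exact mul_sum_twinWeight_div_sub_le _ _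

lemma eventually_mul_sum_card_exceptionalPrimes_le {n : ℕ} (hn : n ≠ 0) {ε : ℝ} (hε : 0 < ε) :
    ∀ᶠ k in atTop, ∀ {M : ℕ}, M ≠ 0 → ∀ a : ℕ, ∀ᶠ N : ℕ in atTop,
      N * ∑ i ∈ Ico k N, (#(exceptionalPrimes n M a i N) : ℝ) ≤ ε * (2 ^ N / M.totient) := by
  obtain ⟨C, hC0, hC⟩ := mul_sum_card_exceptionalPrimes_le hn
  filter_upwards [eventually_eventually_convolutionBound_lt
    (by positivity : 0 < ε / (2 * C))] with k hk M hM a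
  have : (0 : ℝ) < M.totient := by exact_mod_cast Nat.totient_pos.2 hM.bot_lt
  filter_upwards [hk, (tendsto_convolutionBound (tendsto_sub_atTop_nat (2 * M))).eventually_lt_const
    (by positivity : 0 < ε / (2 * C * M.totient))] with N hN hN'
  calc N * ∑ i ∈ Ico k N, (#(exceptionalPrimes n M a i N) : ℝ)
      ≤ C * 2 ^ N * (convolutionBound k N / M.totient + convolutionBound (N - 2 * M) N) :=
        hC hM Nat.lt_two_pow_self.le a k N
    _ ≤ C * 2 ^ N * (ε / (2 * C) / M.totient + ε / (2 * C * M.totient)) := by gcongr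
    _ = ε * (2 ^ N / M.totient) := by
        field_simp
        ring

end ExceptionalPrimes

section GoodPrime

lemma eventually_frequently_exists_prime_notMem_exceptionalPrimes {n : ℕ} (hn : n ≠ 0) :
    ∀ᶠ k in atTop, ∀ {M a : ℕ}, M ≠ 0 → a.Coprime M → ∃ᶠ N in atTop,
      ∃ p ∈ Ico (2 ^ N) (2 ^ (N + 1)), p.Prime ∧ p ≡ a [MOD M] ∧
        ∀ i ∈ Ico k N, p ∉ exceptionalPrimes n M a i N := by
  filter_upwards [eventually_mul_sum_card_exceptionalPrimes_le hn (ε := 1 / 4) (by norm_num)]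
    with k hk M a hM ha
  refine ((frequently_lt_mul_card_prime_dyadic hM ha).and_eventually (hk hM a)).mono
    fun N ⟨hprimes, hexceptional⟩ ↦ ?_
  have hcard : #((Ico k N).biUnion fun i ↦ exceptionalPrimes n M a i N) <
      #{p ∈ Ico (2 ^ N) (2 ^ (N + 1)) | p.Prime ∧ p ≡ a [MOD M]} := by
    refine card_biUnion_le.trans_lt ?_
    have := hexceptional.trans_lt hprimes
    exact_mod_cast lt_of_mul_lt_mul_left this N.cast_nonneg
  obtain ⟨p, hp, hnot⟩ := exists_mem_notMem_of_card_lt_card hcard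
  obtain ⟨hpI, hprime, hpa⟩ := mem_filter.1 hp
  exact ⟨p, hpI, hprime, hpa, fun i hi hpi ↦ hnot (mem_biUnion.2 ⟨i, hi, hpi⟩)⟩

lemma odd_and_coprime_of_dvd_two_mul_add_two {M D : ℕ} (h4 : 4 ∣ M) (h : M ∣ 2 * D + 2) :
    Odd D ∧ M.Coprime D := by
  have hodd : Odd D := by
    rw [Nat.odd_iff]
    have := h4.trans h
    omega
  have hcoprime : (2 * D + 2).Coprime D := by
    rw [Nat.coprime_mul_right_add_left]
    exact Nat.coprime_two_left.2 hodd
  exact ⟨hodd, hcoprime.coprime_dvd_left h⟩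

lemma lt_of_coprime_factorial {K D : ℕ} (hD : 1 < D) (h : K.factorial.Coprime D) : K < D := by
  by_contra! hDK
  exact hD.ne' (Nat.eq_one_of_dvd_coprimes h (Nat.dvd_factorial (by omega) hDK) dvd_rfl)

lemma exists_mem_exceptionalPrimes_of_dvd {n M a k N D₀ D : ℕ} (hprime : (2 * D₀ + 1).Prime)
    (hlt : 2 * D₀ + 1 < 2 ^ (N + 1)) (ha : 2 * D₀ + 1 ≡ a [MOD M]) (hodd : Odd D₀)
    (hD : D ∣ D₀) (hMD : M.Coprime D) (hkD : 2 ^ k ≤ D) (htwin : IsTwinMultiplier n D) :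
    ∃ i ∈ Ico k N, 2 * D₀ + 1 ∈ exceptionalPrimes n M a i N := by
  have hDN : D < 2 ^ N := by
    have := Nat.le_of_dvd hodd.pos hD
    rw [pow_succ] at hlt
    omega
  have hD0 : D ≠ 0 := ne_zero_of_dvd_ne_zero hodd.pos.ne' hD
  have hmod : 2 * D₀ + 1 ≡ 1 [MOD D] :=
    ((Nat.modEq_iff_dvd' (by omega)).2 (by simpa using hD.mul_left 2)).symm
  exact ⟨D.log2, mem_Ico.2 ⟨(Nat.le_log2 hD0).2 hkD, (Nat.log2_lt hD0).2 hDN⟩,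
    mem_exceptionalPrimes.2 ⟨hlt, hprime, ha, D, mem_oddTwinMultipliers.2
      ⟨⟨Nat.log2_self_le hD0, Nat.lt_log2_self⟩, hodd.of_dvd_nat hD, htwin⟩, hMD, hmod⟩⟩

lemma exists_prime_two_mul_add_one_forall_not_isTwinMultiplier {n : ℕ} (hn : n ≠ 0) :
    ∃ D₀ > n, (2 * D₀ + 1).Prime ∧ ∀ D, D ∣ D₀ → 1 < D → ¬ IsTwinMultiplier n D := by
  obtain ⟨k, hk, hk2⟩ := ((eventually_frequently_exists_prime_notMem_exceptionalPrimes hn).and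
    (eventually_ge_atTop 2)).exists
  set M := (2 ^ k).factorial
  have hM : 0 < M := Nat.factorial_pos _
  have h4 : 4 ∣ M := Nat.dvd_factorial (by norm_num) (Nat.pow_le_pow_right (n := 2) two_pos hk2)
  have hcop : (M - 1).Coprime M :=
    (Nat.coprime_self_sub_left hM).2 (Nat.coprime_one_left M)
  obtain ⟨N, ⟨p, hpI, hprime, hpa, hp⟩, hN⟩ :=
    ((hk hM.ne' hcop).and_eventually (eventually_gt_atTop (2 * n + 1))).exists
  have hpN := mem_Ico.1 hpI
  have hNlt : N < 2 ^ N := Nat.lt_two_pow_self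
  obtain ⟨D₀, rfl⟩ : Odd p := hprime.odd_of_ne_two (by omega)
  have hdvd : M ∣ 2 * D₀ + 2 := by
    have := hpa.add_right 1
    rw [Nat.sub_add_cancel hM] at this
    exact Nat.modEq_zero_iff_dvd.1 (this.trans (Nat.modEq_zero_iff_dvd.2 dvd_rfl))
  obtain ⟨hodd, hcoprime⟩ := odd_and_coprime_of_dvd_two_mul_add_two h4 hdvd
  refine ⟨D₀, by omega, hprime, fun D hD hD1 htwin ↦ ?_⟩
  have hMD : M.Coprime D := hcoprime.coprime_dvd_right hD
  have hkD : 2 ^ k ≤ D := (lt_of_coprime_factorial hD1 hMD).le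
  obtain ⟨i, hi, hpi⟩ :=
    exists_mem_exceptionalPrimes_of_dvd hprime hpN.2 hpa hodd hD hMD hkD htwin
  exact hp i hi hpi

end GoodPrime

section ShiftedPrimeDivisors

/-- The divisors of `n` counted by `ω*(n)`. -/
def shiftedPrimeDivisors (n : ℕ) : Finset ℕ := {d ∈ n.divisors | (d + 1).Prime}

lemma mem_shiftedPrimeDivisors {n d : ℕ} :
    d ∈ shiftedPrimeDivisors n ↔ (d ∣ n ∧ n ≠ 0) ∧ (d + 1).Prime := by
  simp [shiftedPrimeDivisors]

lemma card_shiftedPrimeDivisors (n : ℕ) : #(shiftedPrimeDivisors n) = omegaStar n := rfl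

lemma shiftedPrimeDivisors_subset {m n : ℕ} (hn : n ≠ 0) (h : m ∣ n) :
    shiftedPrimeDivisors m ⊆ shiftedPrimeDivisors n :=
  filter_subset_filter _ (Nat.divisors_subset_of_dvd hn h)

lemma omegaStar_mul_le_add_one {n D : ℕ} (hnD : n * D ≠ 0) (htwin : ¬ IsTwinMultiplier n D)
    (hmin : ∀ g, g ∣ D → g ≠ D → shiftedPrimeDivisors (n * g) ⊆ shiftedPrimeDivisors n) :
    omegaStar (n * D) ≤ omegaStar n + 1 := by
  have hnew {d : ℕ} (hd : d ∈ shiftedPrimeDivisors (n * D) \ shiftedPrimeDivisors n) :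
      ∃ e, e ∣ n ∧ d = e * D ∧ (1 + e * D).Prime := by
    obtain ⟨hd, hdn⟩ := mem_sdiff.1 hd
    obtain ⟨⟨hdvd, -⟩, hprime⟩ := mem_shiftedPrimeDivisors.1 hd
    obtain ⟨e, g, hen, hgD, rfl⟩ := exists_dvd_and_dvd_of_dvd_mul hdvd
    obtain rfl : g = D := by
      by_contra hg
      have hng : n * g ≠ 0 := ne_zero_of_dvd_ne_zero hnD (mul_dvd_mul_left n hgD)
      exact hdn (hmin g hgD hg
        (mem_shiftedPrimeDivisors.2 ⟨⟨mul_dvd_mul_right hen g, hng⟩, hprime⟩))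
    exact ⟨e, hen, rfl, add_comm _ 1 ▸ hprime⟩
  have hone : #(shiftedPrimeDivisors (n * D) \ shiftedPrimeDivisors n) ≤ 1 := by
    refine card_le_one.2 fun d₁ hd₁ d₂ hd₂ ↦ ?_
    obtain ⟨e₁, he₁, rfl, hp₁⟩ := hnew hd₁
    obtain ⟨e₂, he₂, rfl, hp₂⟩ := hnew hd₂
    rcases lt_trichotomy e₁ e₂ with h | rfl | h
    · exact (htwin ⟨e₁, e₂, h, he₁, he₂, hp₁, hp₂⟩).elim
    · rfl
    · exact (htwin ⟨e₂, e₁, h, he₂, he₁, hp₂, hp₁⟩).elim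
  rw [← card_shiftedPrimeDivisors, ← card_shiftedPrimeDivisors]
  have := card_le_card_sdiff_add_card (s := shiftedPrimeDivisors (n * D))
    (t := shiftedPrimeDivisors n)
  omega

lemma exists_dvd_omegaStar_mul_eq_add_one {n D₀ : ℕ} (hnD₀ : n * D₀ ≠ 0)
    (hlt : omegaStar n < omegaStar (n * D₀))
    (htwin : ∀ D, D ∣ D₀ → 1 < D → ¬ IsTwinMultiplier n D) :
    ∃ D, D ∣ D₀ ∧ omegaStar (n * D) = omegaStar n + 1 := by
  classical
  have hex : ∃ D, D ∣ D₀ ∧ omegaStar n < omegaStar (n * D) := ⟨D₀, dvd_rfl, hlt⟩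
  obtain ⟨D, ⟨hDD₀, hD⟩, hmin⟩ := Nat.findX hex
  have hnD : n * D ≠ 0 := ne_zero_of_dvd_ne_zero hnD₀ (mul_dvd_mul_left n hDD₀)
  have hD0 : D ≠ 0 := right_ne_zero_of_mul hnD
  have hD1 : D ≠ 1 := by
    rintro rfl
    simp at hD
  refine ⟨D, hDD₀, le_antisymm ?_ hD⟩
  refine omegaStar_mul_le_add_one hnD (htwin D hDD₀ (by omega)) fun g hgD hg ↦ ?_
  have hgle : omegaStar (n * g) ≤ omegaStar n := by
    by_contra! h
    exact hmin g ((Nat.le_of_dvd hD0.bot_lt hgD).lt_of_ne hg) ⟨hgD.trans hDD₀, h⟩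
  have hng : n * g ≠ 0 := ne_zero_of_dvd_ne_zero hnD (mul_dvd_mul_left n hgD)
  exact (eq_of_subset_of_card_le (shiftedPrimeDivisors_subset hng (dvd_mul_right n g)) hgle).ge

lemma omegaStar_lt_of_dvd {n m d : ℕ} (hn : n ≠ 0) (hm : m ≠ 0) (hnm : n ∣ m) (hdm : d ∣ m)
    (hdn : n < d) (hd : (d + 1).Prime) :
    omegaStar n < omegaStar m := by
  refine card_lt_card ((ssubset_iff_of_subset (shiftedPrimeDivisors_subset hm hnm)).2
    ⟨d, mem_shiftedPrimeDivisors.2 ⟨⟨hdm, hm⟩, hd⟩, fun h ↦ ?_⟩)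
  exact hdn.not_ge (Nat.le_of_dvd hn.bot_lt (mem_shiftedPrimeDivisors.1 h).1.1)

end ShiftedPrimeDivisors

theorem exists_multiple_with_one_more_shifted_prime_divisor (n : ℕ) (hn : 0 < n)
    (heven : 2 ∣ n) :
    ∃ m : ℕ, 0 < m ∧ n ∣ m ∧ omegaStar m = omegaStar n + 1 := by
  obtain ⟨D₀, hnD₀, hprime, htwin⟩ :=
    exists_prime_two_mul_add_one_forall_not_isTwinMultiplier hn.ne'
  have hmul : n * D₀ ≠ 0 := (Nat.mul_pos hn (by omega)).ne'
  have hlt : omegaStar n < omegaStar (n * D₀) :=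
    omegaStar_lt_of_dvd hn.ne' hmul (dvd_mul_right n D₀) (mul_dvd_mul_right heven D₀) (by omega)
      hprime
  obtain ⟨D, hD, hω⟩ := exists_dvd_omegaStar_mul_eq_add_one hmul hlt htwin
  exact ⟨n * D, Nat.pos_of_ne_zero (ne_zero_of_dvd_ne_zero hmul (mul_dvd_mul_left n hD)),
    dvd_mul_right n D, hω⟩
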